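/- arXiv:1303.2453 — 2 statements merged into one kernel-verified Lean document; each statement's English description precedes it below -/
import Mathlib

section
/- For every level-2 collapsible pushdown system S=(Q,Σ,Γ,Δ,q₀) there is a deterministic finite automaton with output with at most 2^{|Q|²}·2^{|Q|²}·|Σ|²·2 states which, reading the word w↓₀ for any word w occurring as the topmost word of some stack in Stacks(Σ), outputs ExRet(w), ExLoop(w), ExHLoop(w), ExLLoop(w), ExOneLoop(w), Sym(w) and Lvl(w). -/
namespace CPG

/-! ## Level-2 collapsible pushdown stacks -/

/-- Stack letters: `Sum.inl σ` is a letter with a level-1 link,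
`Sum.inr (σ, k)` is a letter with a level-2 link to the substack of width `k`. -/
abbrev Letter (A : Type) := A ⊕ (A × ℕ)

def symOf {A : Type} : Letter A → A
  | Sum.inl a => a
  | Sum.inr (a, _) => a

def lvlOf {A : Type} : Letter A → ℕ
  | Sum.inl _ => 1
  | Sum.inr _ => 2

abbrev Word (A : Type) := List (Letter A)

/-- A 2-word: a list of words; the last word is the topmost one. -/
abbrev Stack2 (A : Type) := List (Word A)

/-- The initial level-2 stack `⊥₂`. -/
def bottom2 {A : Type} (bot : A) : Stack2 A := [[Sum.inl bot]]

def top2 {A : Type} (s : Stack2 A) : Option (Word A) := s.getLast?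

def top1 {A : Type} (s : Stack2 A) : Option (Letter A) := s.getLast?.bind List.getLast?

def symS {A : Type} (s : Stack2 A) : Option A := (top1 s).map symOf

def lvlS {A : Type} (s : Stack2 A) : Option ℕ := (top1 s).map lvlOf

def lnkS {A : Type} (s : Stack2 A) : Option ℕ :=
  match top1 s, top2 s with
  | some (Sum.inr (_, j)), _ => some j
  | some (Sum.inl _), some w => some (w.length - 1)
  | _, _ => none

def clone2 {A : Type} (s : Stack2 A) : Option (Stack2 A) :=
  (top2 s).map fun w => s ++ [w]

def push1 {A : Type} [DecidableEq A] (bot a : A) (s : Stack2 A) : Option (Stack2 A) :=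
  if a = bot then none else (top2 s).map fun w => s.dropLast ++ [w ++ [Sum.inl a]]

def push2 {A : Type} [DecidableEq A] (bot a : A) (s : Stack2 A) : Option (Stack2 A) :=
  if a = bot then none else
    (top2 s).map fun w => s.dropLast ++ [w ++ [Sum.inr (a, s.length - 1)]]

def pop2 {A : Type} (s : Stack2 A) : Option (Stack2 A) :=
  if 1 < s.length then some s.dropLast else none

def pop1 {A : Type} (s : Stack2 A) : Option (Stack2 A) :=
  match s.getLast? with
  | some w => if 1 < w.length then some (s.dropLast ++ [w.dropLast]) else none
  | none => none

def collapse {A : Type} (s : Stack2 A) : Option (Stack2 A) :=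
  match top1 s with
  | some (Sum.inr (_, k)) => if 0 < k then some (s.take k) else none
  | some (Sum.inl _) => pop1 s
  | none => none

/-- The level-2 stack operations. -/
inductive Op (A : Type) where
  | clone2 | pop1 | pop2 | collapse
  | push1 (a : A) | push2 (a : A)

def applyOp {A : Type} [DecidableEq A] (bot : A) : Op A → Stack2 A → Option (Stack2 A)
  | .clone2 => clone2
  | .pop1 => pop1
  | .pop2 => pop2
  | .collapse => collapse
  | .push1 a => push1 bot a
  | .push2 a => push2 bot a

/-- `Stacks(Σ)` : the smallest set containing `⊥₂` and closed under the operations. -/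
inductive IsStack {A : Type} [DecidableEq A] (bot : A) : Stack2 A → Prop where
  | base : IsStack bot (bottom2 bot)
  | step {s t : Stack2 A} (op : Op A) : IsStack bot s → applyOp bot op s = some t →
      IsStack bot t

/-- Iterated application of a partial stack operation. -/
def iter {A : Type} (f : Stack2 A → Option (Stack2 A)) : ℕ → Stack2 A → Option (Stack2 A)
  | 0, s => some s
  | n + 1, s => (f s).bind (iter f n)

/-- `t` is a substack of `s`: `t = Pop₁ⁿ(Pop₂ᵐ(s))`. -/
def Substack {A : Type} (t s : Stack2 A) : Prop :=
  ∃ n m, (iter pop2 m s).bind (iter pop1 n) = some t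

def ProperSubstack {A : Type} (t s : Stack2 A) : Prop := Substack t s ∧ t ≠ s

/-- `s` is a prefix of `t` (`s ⊑ t`). -/
def StackPrefix {A : Type} (s t : Stack2 A) : Prop :=
  s ≠ [] ∧ s.length ≤ t.length ∧ s.dropLast <+: t ∧
    ∀ j, s.length - 1 ≤ j → j < t.length → s.getLastD [] <+: t.getD j []

/-- `t[s/u]` : the stack obtained from `t` by replacing the prefix `s` by `u`. -/
def substPrefix {A : Type} (t s u : Stack2 A) : Stack2 A :=
  u.dropLast ++
    (t.drop (s.length - 1)).map fun v => u.getLastD [] ++ v.drop (s.getLastD []).length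

/-! ## Collapsible pushdown systems and runs -/

/-- A level-2 collapsible pushdown system. -/
structure CPS (Q A Γ : Type) where
  bot : A
  q0 : Q
  Δ : Set (Q × A × Γ × Q × Op A)

variable {Q A Γ : Type} [DecidableEq A]

/-- A `γ`-labelled transition realized by the operation `op`. -/
def TransOp (S : CPS Q A Γ) (γ : Γ) (op : Op A) (c c' : Q × Stack2 A) : Prop :=
  ∃ σ : A, symS c.2 = some σ ∧ (c.1, σ, γ, c'.1, op) ∈ S.Δ ∧
    applyOp S.bot op c.2 = some c'.2

def Trans (S : CPS Q A Γ) (γ : Γ) (c c' : Q × Stack2 A) : Prop :=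
  ∃ op, TransOp S γ op c c'

/-- A run of a collapsible pushdown system (recording configurations, labels and
operations of each step). -/
structure Run (S : CPS Q A Γ) where
  len : ℕ
  cfg : ℕ → Q × Stack2 A
  lab : ℕ → Γ
  op : ℕ → Op A
  ok : ∀ i, i < len → TransOp S (lab i) (op i) (cfg i) (cfg (i + 1))

def Run.stk {S : CPS Q A Γ} (ρ : Run S) (i : ℕ) : Stack2 A := (ρ.cfg i).2

/-- The word of labels along a run. -/
def Run.labels {S : CPS Q A Γ} (ρ : Run S) : List Γ :=
  List.ofFn fun i : Fin ρ.len => ρ.lab i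

/-- `Reach_L`-reachability: a run from `c` to `c'` labelled by a word in `L`. -/
def ReachL (S : CPS Q A Γ) (L : Language Γ) (c c' : Q × Stack2 A) : Prop :=
  ∃ ρ : Run S, ρ.cfg 0 = c ∧ ρ.cfg ρ.len = c' ∧ ρ.labels ∈ L

/-- Plain reachability. -/
def Reach (S : CPS Q A Γ) (c c' : Q × Stack2 A) : Prop :=
  ∃ ρ : Run S, ρ.cfg 0 = c ∧ ρ.cfg ρ.len = c'

/-! ## ε-contraction -/

def oneLetterLang (γ : Γ) : Language Γ := {[γ]}

def nonEpsLang (eps : Γ) : Language Γ := {w | ∃ γ : Γ, γ ≠ eps ∧ w = [γ]}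

/-- The language `{ε}*`. -/
def epsStar (eps : Γ) : Language Γ := KStar.kstar (oneLetterLang eps)

/-- The language `({ε}*(Γ∖{ε}))*`. -/
def domLang (eps : Γ) : Language Γ :=
  KStar.kstar (epsStar eps * nonEpsLang eps)

/-- The language `{ε}*γ`. -/
def edgeLang (eps γ : Γ) : Language Γ := epsStar eps * oneLetterLang γ

/-- The vertex set of the ε-contraction `G/ε`. -/
def EpsDomain (S : CPS Q A Γ) (eps : Γ) : Set (Q × Stack2 A) :=
  {c | ReachL S (domLang eps) (S.q0, bottom2 S.bot) c}

/-! ## (Generalised) milestones and the order ≪ -/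

/-- `wordAt bot s i` is the word `wᵢ` of `s`, with the convention `w₀ = ⊥`. -/
def wordAt {A : Type} (bot : A) (s : Stack2 A) (i : ℕ) : Word A :=
  if i = 0 then [Sum.inl bot] else s.getD (i - 1) []

/-- Longest common prefix of two words. -/
def lcp {α : Type} [DecidableEq α] : List α → List α → List α
  | a :: s, b :: t => if a = b then a :: lcp s t else []
  | _, _ => []

/-- `m` is a generalised milestone of `s`. -/
def GenMilestone (bot : A) (s m : Stack2 A) : Prop :=
  ∃ i v, i < s.length ∧ m = s.take i ++ [v] ∧
    lcp (wordAt bot s i) (wordAt bot s (i + 1)) <+: v ∧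
    (v <+: wordAt bot s i ∨ v <+: wordAt bot s (i + 1))

/-- `m` is a milestone of `s`. -/
def Milestone (bot : A) (s m : Stack2 A) : Prop :=
  ∃ i v, i < s.length ∧ m = s.take i ++ [v] ∧
    lcp (wordAt bot s i) (wordAt bot s (i + 1)) <+: v ∧
    v <+: wordAt bot s (i + 1)

def genMilestones (bot : A) (s : Stack2 A) : Set (Stack2 A) := {m | GenMilestone bot s m}

def milestones (bot : A) (s : Stack2 A) : Set (Stack2 A) := {m | Milestone bot s m}

/-- The base cases of the partial order `≪`. -/
def llBase (bot : A) (s t : Stack2 A) : Prop :=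
  s.length < t.length ∨
    (s ≠ [] ∧ s.length = t.length ∧ s.dropLast = t.dropLast ∧
      ((t.getLastD [] <+: s.getLastD [] ∧ t.getLastD [] ≠ s.getLastD [] ∧
          s.getLastD [] <+: wordAt bot s (s.length - 1)) ∨
        (s.getLastD [] <+: t.getLastD [] ∧ s.getLastD [] ≠ t.getLastD [] ∧
          ¬ t.getLastD [] <+: wordAt bot s (s.length - 1))))

/-- The order `≪`: the smallest reflexive transitive relation containing `llBase`. -/
def ll (bot : A) : Stack2 A → Stack2 A → Prop := Relation.ReflTransGen (llBase bot)

/-- `m'` is the ≪-successor of `m` within `genMilestones bot s`. -/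
def LlSuccessor (bot : A) (s m m' : Stack2 A) : Prop :=
  GenMilestone bot s m ∧ GenMilestone bot s m' ∧ m ≠ m' ∧ ll bot m m' ∧
    ∀ m'', GenMilestone bot s m'' → ll bot m m'' → m'' ≠ m → ll bot m' m''

/-! ## Loops, returns and 1-loops -/

/-- The segment `[i,j]` of `ρ` is a loop (of its initial stack). -/
def LoopSeg {S : CPS Q A Γ} (ρ : Run S) (i j : ℕ) : Prop :=
  i ≤ j ∧ j ≤ ρ.len ∧ ρ.stk j = ρ.stk i ∧
    (∀ k, i ≤ k → k ≤ j → ∀ t, pop2 (ρ.stk i) = some t → ¬ Substack (ρ.stk k) t) ∧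
    (∀ k, i ≤ k → k ≤ j → ∀ m, 0 < m → ∀ t, iter pop1 m (ρ.stk i) = some t →
      ρ.stk k = t → ∀ m', m' < m → ∃ t', iter pop1 m' (ρ.stk i) = some t' ∧
        lvlS t' = some 1)

/-- A high loop: a loop that never visits `Pop₁` of its stack. -/
def HighLoopSeg {S : CPS Q A Γ} (ρ : Run S) (i j : ℕ) : Prop :=
  LoopSeg ρ i j ∧ ∀ k, i ≤ k → k ≤ j → ∀ t, pop1 (ρ.stk i) = some t → ρ.stk k ≠ t

/-- A low loop: a loop whose second and second-to-last stacks are `Pop₁` of its stack. -/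
def LowLoopSeg {S : CPS Q A Γ} (ρ : Run S) (i j : ℕ) : Prop :=
  LoopSeg ρ i j ∧ i < j ∧
    ∃ t, pop1 (ρ.stk i) = some t ∧ ρ.stk (i + 1) = t ∧ ρ.stk (j - 1) = t

/-- The common part of the definition of a return on the segment `[i,j]`:
it leads from its initial stack `t` to `Pop₂(t)` and never visits a substack
of `Pop₂(t)` before its final configuration. -/
def RetShell {S : CPS Q A Γ} (ρ : Run S) (i j : ℕ) : Prop :=
  i < j ∧ j ≤ ρ.len ∧ pop2 (ρ.stk i) = some (ρ.stk j) ∧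
    ∀ k, i ≤ k → k < j → ¬ Substack (ρ.stk k) (ρ.stk j)

/-- The segment `[i,j]` of `ρ` is a return (from its initial stack `t` to `Pop₂(t)`). -/
inductive RetSeg {S : CPS Q A Γ} (ρ : Run S) : ℕ → ℕ → Prop where
  | pop2 {i j : ℕ} (h : RetShell ρ i j) (hop : ρ.op (j - 1) = Op.pop2) : RetSeg ρ i j
  | collapse {i j : ℕ} (h : RetShell ρ i j) (hop : ρ.op (j - 1) = Op.collapse)
      (hpre : ∃ w w', top2 (ρ.stk i) = some w ∧ top2 (ρ.stk (j - 1)) = some w' ∧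
        w <+: w' ∧ w ≠ w') : RetSeg ρ i j
  | sub {i k j : ℕ} (h : RetShell ρ i j) (hik : i < k) (hkj : k ≤ j)
      (hpop : pop1 (ρ.stk i) = some (ρ.stk k)) (hret : RetSeg ρ k j) : RetSeg ρ i j

/-- The segment `[i,j]` of `ρ` is a level-1-loop. -/
def OneLoopSeg {S : CPS Q A Γ} (ρ : Run S) (i j : ℕ) : Prop :=
  i ≤ j ∧ j ≤ ρ.len ∧
    ∃ (s : Stack2 A) (w : Word A) (s' : Stack2 A),
      ρ.stk i = s ++ [w] ∧ ρ.stk j = s ++ s' ++ [w] ∧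
      (∀ k, i ≤ k → k ≤ j → s.length < (ρ.stk k).length) ∧
      (∀ k, i ≤ k → k ≤ j → 1 < w.length → top2 (ρ.stk k) = some w.dropLast →
        ∃ m, k < m ∧ m ≤ j ∧ RetSeg ρ k m)

/-! ## ExRet, ExLoop, ... -/

/-- `w↓₀` : replace every level-2 link by `0`. -/
def down0 {A : Type} : Word A → Word A :=
  List.map fun a => match a with
    | Sum.inl x => Sum.inl x
    | Sum.inr (x, _) => Sum.inr (x, 0)

def ExRet (S : CPS Q A Γ) (w : Word A) : Set (Q × Q) :=
  {p | ∃ ρ : Run S, ρ.cfg 0 = (p.1, [down0 w, down0 w]) ∧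
    ρ.cfg ρ.len = (p.2, [down0 w]) ∧ RetSeg ρ 0 ρ.len}

def ExLoop (S : CPS Q A Γ) (w : Word A) : Set (Q × Q) :=
  {p | ∃ ρ : Run S, ρ.cfg 0 = (p.1, [down0 w]) ∧ ρ.cfg ρ.len = (p.2, [down0 w]) ∧
    LoopSeg ρ 0 ρ.len}

def ExHLoop (S : CPS Q A Γ) (w : Word A) : Set (Q × Q) :=
  {p | ∃ ρ : Run S, ρ.cfg 0 = (p.1, [down0 w]) ∧ ρ.cfg ρ.len = (p.2, [down0 w]) ∧
    HighLoopSeg ρ 0 ρ.len}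

def ExLLoop (S : CPS Q A Γ) (w : Word A) : Set (Q × Q) :=
  {p | ∃ ρ : Run S, ρ.cfg 0 = (p.1, [down0 w]) ∧ ρ.cfg ρ.len = (p.2, [down0 w]) ∧
    LowLoopSeg ρ 0 ρ.len}

def ExOneLoop (S : CPS Q A Γ) (w : Word A) : Set (Q × Q) :=
  {p | ∃ (ρ : Run S) (s' : Stack2 A), ρ.cfg 0 = (p.1, [down0 w]) ∧
    ρ.cfg ρ.len = (p.2, s' ++ [down0 w]) ∧ OneLoopSeg ρ 0 ρ.len}

/-! ## Finite binary trees -/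

/-- Finite binary trees with labels in `α` and optional left/right children. -/
inductive PTree (α : Type) where
  | node (a : α) (l r : Option (PTree α)) : PTree α

/-- The label of the node at address `d` (`false` = left/0, `true` = right/1). -/
def PTree.labelAt {α : Type} : PTree α → List Bool → Option α
  | .node a _ _, [] => some a
  | .node _ (some t) _, false :: d => t.labelAt d
  | .node _ none _, false :: _ => none
  | .node _ _ (some t), true :: d => t.labelAt d
  | .node _ _ none, true :: _ => none

def PTree.map {α β : Type} (f : α → β) : PTree α → PTree β
  | .node a l r =>
    .node (f a)
      (match l with | none => none | some t => some (t.map f))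
      (match r with | none => none | some t => some (t.map f))

/-- Convolution of two trees, with `none` as padding symbol `□`. -/
def PTree.conv {α β : Type} : PTree α → PTree β → PTree (Option α × Option β)
  | .node a l r, .node b l' r' =>
    .node (some a, some b)
      (match l, l' with
        | none, none => none
        | some t, none => some (t.map fun x => (some x, none))
        | none, some u => some (u.map fun x => (none, some x))
        | some t, some u => some (PTree.conv t u))
      (match r, r' with
        | none, none => none
        | some t, none => some (t.map fun x => (some x, none))
        | none, some u => some (u.map fun x => (none, some x))
        | some t, some u => some (PTree.conv t u))

/-- A (bottom-up nondeterministic) finite tree automaton. -/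
structure TreeAut (α : Type) where
  St : Type
  fin : Finite St
  qI : St
  F : Set St
  Δ : Set (St × α × St × St)

/-- Acceptance of a finite tree by a tree automaton. -/
def TreeAut.Accepts {α : Type} (M : TreeAut α) (t : PTree α) : Prop :=
  ∃ ρ : List Bool → M.St,
    (∀ d, t.labelAt d = none → ρ d = M.qI) ∧
    (∀ d a, t.labelAt d = some a → (ρ d, a, ρ (d ++ [false]), ρ (d ++ [true])) ∈ M.Δ) ∧
    ρ [] ∈ M.F

/-- A family of binary relations on `B` is tree-automatic. -/
def IsTreeAutomatic {B : Type} {I : Type} (E : I → B → B → Prop) : Prop :=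
  ∃ (α : Type) (_ : Finite α) (AB : TreeAut α) (AE : I → TreeAut (Option α × Option α))
    (f : {t : PTree α // AB.Accepts t} → B),
    Function.Bijective f ∧
      ∀ (i : I) (t₁ t₂ : {t : PTree α // AB.Accepts t}),
        (AE i).Accepts (PTree.conv t₁.1 t₂.1) ↔ E i (f t₁) (f t₂)

/-! ## The encoding of configurations as trees -/

/-- Labels of encoding trees: a state, a pair (symbol, link level), or `ε`. -/
abbrev EncLabel (Q A : Type) := Q ⊕ ((A × ℕ) ⊕ Unit)

def epsLab {Q A : Type} : EncLabel Q A := Sum.inr (Sum.inr ())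

def symLab {Q A : Type} (τ : Letter A) : EncLabel Q A := Sum.inr (Sum.inl (symOf τ, lvlOf τ))

/-- Encoding of blocklines as trees (with a fuel parameter driving the recursion;
the fuel used in `encStack` is large enough so that it never runs out on actual
blocklines). The left subtree encodes the blockline induced by the first maximal
block, the right subtree the remaining blocks. -/
def encBL (Q : Type) {A : Type} [DecidableEq A] :
    ℕ → EncLabel Q A → List (Word A) → PTree (EncLabel Q A)
  | 0, σ, _ => .node σ none none
  | _ + 1, σ, [] => .node σ none none
  | fuel + 1, σ, w :: rest =>
    if w.length ≤ 1 then
      match rest with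
      | [] => .node σ none none
      | _ :: _ => .node σ none (some (encBL Q fuel epsLab rest))
    else
      let p : Word A → Bool := fun v => decide (v.take 2 = w.take 2)
      let blk := (w :: rest).takeWhile p
      let restBlk := (w :: rest).dropWhile p
      .node σ
        (some (encBL Q fuel
          (match w[1]? with | some τ' => symLab τ' | none => epsLab)
          (blk.map List.tail)))
        (match restBlk with
          | [] => none
          | _ :: _ => some (encBL Q fuel epsLab restBlk))

/-- The total number of letters of a 2-word. -/
def size2 {A : Type} (s : Stack2 A) : ℕ := (s.map List.length).sum

/-- The encoding `Enc(s) = Enc(s, (⊥,1))` of a stack. -/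
def encStack (Q : Type) {A : Type} [DecidableEq A] (bot : A) (s : Stack2 A) :
    PTree (EncLabel Q A) :=
  encBL Q (size2 s + 1) (Sum.inr (Sum.inl (bot, 1))) s

/-- The encoding of a configuration: the state at the root, `Enc(s)` as left subtree. -/
def Enc {Q A : Type} [DecidableEq A] (bot : A) (c : Q × Stack2 A) : PTree (EncLabel Q A) :=
  .node (Sum.inl c.1) (some (encStack Q bot c.2)) none

/-- The class `EncTrees` of encoding trees. -/
def EncTrees (Q A : Type) (bot : A) : Set (PTree (EncLabel Q A)) :=
  {T | (∃ q : Q, T.labelAt [] = some (Sum.inl q)) ∧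
    T.labelAt [true] = none ∧ T.labelAt [false] ≠ none ∧
    T.labelAt [false] = some (Sum.inr (Sum.inl (bot, 1))) ∧
    (∀ (d : List Bool) (x : EncLabel Q A),
      T.labelAt (false :: (d ++ [false])) = some x →
        ∃ (σ : A) (l : ℕ), σ ≠ bot ∧ (l = 1 ∨ l = 2) ∧ x = Sum.inr (Sum.inl (σ, l))) ∧
    (∀ (d : List Bool) (x : EncLabel Q A), T.labelAt (d ++ [true]) = some x → x = epsLab) ∧
    (∀ (d : List Bool) (σ : A), ¬ (T.labelAt (d ++ [false]) = some (Sum.inr (Sum.inl (σ, 1))) ∧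
      T.labelAt (d ++ [true, false]) = some (Sum.inr (Sum.inl (σ, 1)))))}

/-- Restriction of a tree to the nodes lexicographically ≤ `d`. -/
def restrictLex {α : Type} : PTree α → List Bool → PTree α
  | .node a _ _, [] => .node a none none
  | .node a l _, false :: d =>
      .node a (match l with | none => none | some t => some (restrictLex t d)) none
  | .node a l r, true :: d =>
      .node a l (match r with | none => none | some t => some (restrictLex t d))

/-- The lexicographic order on tree addresses. -/
def lexLe (d e : List Bool) : Prop :=
  d <+: e ∨ ∃ (c x y : List Bool), d = c ++ false :: x ∧ e = c ++ true :: y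

/-! ## Deterministic finite automata with output (Moore machines) -/

structure Moore (α ω : Type) where
  St : Type
  fin : Finite St
  init : St
  step : St → α → St
  out : St → ω

def Moore.output {α ω : Type} (M : Moore α ω) (w : List α) : ω :=
  M.out (w.foldl M.step M.init)

def symW {A : Type} (w : Word A) : Option A := w.getLast?.map symOf

def lvlW {A : Type} (w : Word A) : Option ℕ := w.getLast?.map lvlOf


/-! ## Normal forms of the stack operations -/

section Aux

set_option linter.unusedSectionVars false

theorem clone2_snoc (s : Stack2 A) (u : Word A) :
    clone2 (s ++ [u]) = some (s ++ [u] ++ [u]) := by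
  simp [clone2, top2]

theorem push1_snoc (b a : A) (s : Stack2 A) (u : Word A) :
    push1 b a (s ++ [u]) = if a = b then none else some (s ++ [u ++ [Sum.inl a]]) := by
  simp [push1, top2]

theorem push2_snoc (b a : A) (s : Stack2 A) (u : Word A) :
    push2 b a (s ++ [u]) =
      if a = b then none else some (s ++ [u ++ [Sum.inr (a, s.length)]]) := by
  simp [push2, top2]

theorem pop2_snoc (s : Stack2 A) (u : Word A) :
    pop2 (s ++ [u]) = if s = [] then none else some s := by
  have : (s ++ [u]).dropLast = s := by simp
  rw [pop2, this]
  rcases s with _ | ⟨x, s⟩ <;> simp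

theorem pop1_snoc (s : Stack2 A) (u : Word A) :
    pop1 (s ++ [u]) = if 1 < u.length then some (s ++ [u.dropLast]) else none := by
  simp [pop1]

theorem collapse_snoc (s : Stack2 A) (u : Word A) (x : Letter A) :
    collapse (s ++ [u ++ [x]]) =
      match x with
      | Sum.inl _ => if u = [] then none else some (s ++ [u])
      | Sum.inr (_, k) => if 0 < k then some ((s ++ [u ++ [x]]).take k) else none := by
  rcases x with x | ⟨x, k⟩
  · simp only [collapse, top1]
    simp only [List.getLast?_append, List.getLast?_singleton, Option.some_or, Option.bind_some]
    rw [pop1_snoc, List.dropLast_concat]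
    rcases u with _ | ⟨y, u⟩ <;> simp
  · simp [collapse, top1]

theorem collapse_nil (s : Stack2 A) : collapse (s ++ [([] : Word A)]) = none := by
  simp [collapse, top1]

/-- A single step of the system. -/
def Step (S : CPS Q A Γ) (c c' : Q × Stack2 A) : Prop := ∃ γ op, TransOp S γ op c c'

/-- Paths, recording the list of all visited configurations except the last one. -/
inductive Path (S : CPS Q A Γ) : Q × Stack2 A → List (Q × Stack2 A) → Q × Stack2 A → Prop where
  | nil (c) : Path S c [] c
  | cons {c d e l} : Step S c d → Path S d l e → Path S c (c :: l) e

theorem Path.append {S : CPS Q A Γ} {c d e : Q × Stack2 A} {l l'} (h : Path S c l d)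
    (h' : Path S d l' e) : Path S c (l ++ l') e := by
  induction h with
  | nil c => exact h'
  | cons hs _ ih => exact Path.cons hs (ih h')

theorem Path.eq_of_nil {S : CPS Q A Γ} {c d : Q × Stack2 A} (h : Path S c [] d) : c = d := by
  cases h; rfl

theorem Path.head {S : CPS Q A Γ} {c d e : Q × Stack2 A} {l} (h : Path S c (e :: l) d) :
    c = e := by
  cases h; rfl

theorem applyOp_ne_nil (b : A) (op : Op A) (s t : Stack2 A) (h : applyOp b op s = some t) :
    t ≠ [] := by
  rcases List.eq_nil_or_concat s with rfl | ⟨s, u, rfl⟩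
  · cases op <;> simp [applyOp, clone2, top2, pop1, pop2, collapse, top1, push1, push2] at h
  · cases op with
    | clone2 => simp [applyOp, clone2_snoc] at h; subst h; simp
    | pop1 => simp [applyOp, pop1_snoc] at h; rw [← h.2]; simp
    | pop2 => simp [applyOp, pop2_snoc] at h; rw [← h.2]; exact h.1
    | push1 a => simp [applyOp, push1_snoc] at h; rw [← h.2]; simp
    | push2 a => simp [applyOp, push2_snoc] at h; rw [← h.2]; simp
    | collapse =>
      rcases List.eq_nil_or_concat u with rfl | ⟨u, x, rfl⟩
      · simp [applyOp, collapse_nil] at h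
      · simp only [applyOp, List.concat_eq_append, collapse_snoc] at h
        rcases x with x | ⟨x, k⟩
        · simp at h; rw [← h.2]; simp
        · simp only [Option.ite_none_right_eq_some, Option.some.injEq] at h
          rw [← h.2]
          intro h'
          rw [List.take_eq_nil_iff] at h'
          rcases h' with h' | h'
          · omega
          · simp at h'

theorem Path.ne_nil {S : CPS Q A Γ} {c d : Q × Stack2 A} {l} (h : Path S c l d)
    (hc : c.2 ≠ []) : d.2 ≠ [] ∧ ∀ x ∈ l, x.2 ≠ [] := by
  induction h with
  | nil c => simpa using hc
  | cons hs _ ih =>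
    obtain ⟨γ, op, σ, _, _, h3⟩ := hs
    have := ih (applyOp_ne_nil _ _ _ _ h3)
    refine ⟨this.1, ?_⟩
    simp only [List.mem_cons, forall_eq_or_imp]
    exact ⟨hc, this.2⟩

/-! ## Runs and paths -/

theorem Run.path {S : CPS Q A Γ} (ρ : Run S) (n : ℕ) : ∀ i, i + n ≤ ρ.len →
    Path S (ρ.cfg i) ((List.range' i n).map ρ.cfg) (ρ.cfg (i + n)) := by
  induction n with
  | zero => intro i _; exact Path.nil _
  | succ n ih =>
    intro i hi
    simp only [List.range'_succ, List.map_cons]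
    refine Path.cons ⟨_, _, ρ.ok i (by omega)⟩ ?_
    have := ih (i + 1) (by omega)
    rwa [show i + 1 + n = i + (n + 1) by omega] at this

theorem Path.run [Nonempty Γ] {S : CPS Q A Γ} {c d : Q × Stack2 A} {l} (h : Path S c l d) :
    ∃ ρ : Run S, ρ.len = l.length ∧ ρ.cfg 0 = c ∧ (List.range' 0 ρ.len).map ρ.cfg = l ∧
      ρ.cfg ρ.len = d := by
  induction h with
  | nil c =>
    exact ⟨⟨0, fun _ => c, fun _ => Classical.arbitrary Γ, fun _ => Op.clone2,
      fun i hi => absurd hi (by omega)⟩, rfl, rfl, rfl, rfl⟩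
  | @cons c d e l hs _ ih =>
    obtain ⟨ρ, h1, h2, h3, h4⟩ := ih
    obtain ⟨γ, op, ht⟩ := hs
    refine ⟨⟨ρ.len + 1, fun k => Nat.casesOn k c ρ.cfg, fun k => Nat.casesOn k γ ρ.lab,
      fun k => Nat.casesOn k op ρ.op, ?_⟩, ?_, rfl, ?_, ?_⟩
    · intro i hi
      cases i with
      | zero => simpa [h2] using ht
      | succ i => exact ρ.ok i (by omega)
    · simp [h1]
    · simp only [List.range'_succ, List.map_cons]
      congr 1
      rw [← h3]
      rw [List.range'_eq_map_range, List.range'_eq_map_range, List.map_map, List.map_map]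
      apply List.map_congr_left
      intro k _
      simp [Nat.add_comm]
    · exact h4

theorem iter_pop2_length (m : ℕ) : ∀ (s t : Stack2 A), iter pop2 m s = some t →
    t.length ≤ s.length := by
  induction m with
  | zero => intro s t h; simp [iter] at h; subst h; rfl
  | succ m ih =>
    intro s t h
    simp only [iter, Option.bind_eq_some_iff] at h
    obtain ⟨r, h1, h2⟩ := h
    have := ih _ _ h2
    simp only [pop2] at h1
    split at h1
    · simp at h1; subst h1; simp at this; omega
    · simp at h1

theorem pop1_length (s t : Stack2 A) (h : pop1 s = some t) : t.length = s.length := by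
  rcases List.eq_nil_or_concat s with rfl | ⟨s, u, rfl⟩
  · simp [pop1] at h
  · simp [pop1_snoc] at h; rw [← h.2]; simp

theorem iter_pop1_length (m : ℕ) : ∀ (s t : Stack2 A), iter pop1 m s = some t →
    t.length = s.length := by
  induction m with
  | zero => intro s t h; simp [iter] at h; subst h; rfl
  | succ m ih =>
    intro s t h
    simp only [iter, Option.bind_eq_some_iff] at h
    obtain ⟨r, h1, h2⟩ := h
    rw [ih _ _ h2, pop1_length _ _ h1]

theorem Substack.length {t s : Stack2 A} (h : Substack t s) : t.length ≤ s.length := by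
  obtain ⟨n, m, h⟩ := h
  rw [Option.bind_eq_some_iff] at h
  obtain ⟨r, h1, h2⟩ := h
  rw [iter_pop1_length _ _ _ h2]
  exact iter_pop2_length _ _ _ h1

theorem Substack.refl (s : Stack2 A) : Substack s s := ⟨0, 0, rfl⟩

/-! ## Words with trivial links, and shifting links -/

/-- All links of the word are `0` or at least `n`. -/
def LinkOK (n : ℕ) (u : Word A) : Prop := ∀ a k, Sum.inr (a, k) ∈ u → k = 0 ∨ n ≤ k

def ZeroW (u : Word A) : Prop := ∀ a k, Sum.inr (a, k) ∈ u → k = 0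

def shiftL (n n' : ℕ) : Letter A → Letter A
  | Sum.inl a => Sum.inl a
  | Sum.inr (a, 0) => Sum.inr (a, 0)
  | Sum.inr (a, k + 1) => Sum.inr (a, k + 1 - n + n')

theorem symOf_shiftL (n n' : ℕ) (x : Letter A) : symOf (shiftL n n' x) = symOf x := by
  rcases x with x | ⟨x, _ | k⟩ <;> rfl

def shiftS (n n' : ℕ) (T : Stack2 A) : Stack2 A := T.map (List.map (shiftL n n'))

theorem shiftW_zero (n n' : ℕ) (u : Word A) (h : ZeroW u) : u.map (shiftL n n') = u := by
  induction u with
  | nil => rfl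
  | cons x u ih =>
    rw [List.map_cons, ih (fun a k hk => h a k (List.mem_cons_of_mem _ hk))]
    congr 1
    rcases x with x | ⟨x, k⟩
    · rfl
    · have := h x k (by simp)
      subst this; rfl

theorem symS_snoc (s : Stack2 A) (u : Word A) : symS (s ++ [u]) = u.getLast?.map symOf := by
  simp [symS, top1]

theorem ite_some {α : Type} (p : Prop) [Decidable p] (a b : α) :
    (if p then none else some a) = some b ↔ ¬ p ∧ a = b := by
  split <;> simp [*]

theorem shift_step (b : A) (op : Op A) (s s' T t : Stack2 A) (hs : s ≠ []) (hs' : s' ≠ [])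
    (hT : T ≠ []) (hok : ∀ u ∈ T, LinkOK s.length u) (h : applyOp b op (s ++ T) = some t) :
    (∃ T2, T2 ≠ [] ∧ (∀ u ∈ T2, LinkOK s.length u) ∧ t = s ++ T2 ∧
      applyOp b op (s' ++ shiftS s.length s'.length T) =
        some (s' ++ shiftS s.length s'.length T2)) ∨
    (t = s ∧ applyOp b op (s' ++ shiftS s.length s'.length T) = some s') := by
  have hpos : 0 < s.length := List.length_pos_iff.2 hs
  have hpos' : 0 < s'.length := List.length_pos_iff.2 hs'
  rcases List.eq_nil_or_concat T with rfl | ⟨T, u, rfl⟩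
  · exact absurd rfl hT
  simp only [List.concat_eq_append, List.mem_append, List.mem_singleton] at hok
  have hokT : ∀ v ∈ T, LinkOK s.length v := fun v hv => hok v (Or.inl hv)
  have hoku : LinkOK s.length u := hok u (Or.inr rfl)
  simp only [List.concat_eq_append, ← List.append_assoc] at h ⊢
  have hsh : s' ++ shiftS s.length s'.length (T ++ [u]) =
      (s' ++ shiftS s.length s'.length T) ++ [u.map (shiftL s.length s'.length)] := by
    simp [shiftS]
  rw [hsh]
  cases op with
  | clone2 =>
    left
    simp only [applyOp, clone2_snoc, Option.some.injEq] at h ⊢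
    refine ⟨T ++ [u] ++ [u], by simp, ?_, ?_, ?_⟩
    · intro v hv; simp at hv; rcases hv with hv | rfl
      · exact hokT v hv
      · exact hoku
    · rw [← h]; simp
    · simp [shiftS]
  | push1 a =>
    left
    simp only [applyOp, push1_snoc, ite_some] at h ⊢
    refine ⟨T ++ [u ++ [Sum.inl a]], by simp, ?_, ?_, h.1, ?_⟩
    · intro v hv; simp at hv; rcases hv with hv | rfl
      · exact hokT v hv
      · intro x k hk; simp at hk; exact hoku x k hk
    · rw [← h.2]; simp
    · simp [shiftS, shiftL]
  | push2 a =>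
    left
    simp only [applyOp, push2_snoc, ite_some] at h ⊢
    refine ⟨T ++ [u ++ [Sum.inr (a, s.length + T.length)]], by simp, ?_, ?_, h.1, ?_⟩
    · intro v hv; simp at hv; rcases hv with hv | rfl
      · exact hokT v hv
      · intro x k hk; simp at hk; rcases hk with hk | hk
        · exact hoku x k hk
        · right; omega
    · rw [← h.2]; simp
    · obtain ⟨m, hm⟩ : ∃ m, s.length + T.length = m + 1 := ⟨s.length + T.length - 1, by omega⟩
      simp [shiftS, shiftL, hm]
      omega
  | pop2 =>
    simp only [applyOp, pop2_snoc, ite_some] at h ⊢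
    rcases List.eq_nil_or_concat T with rfl | ⟨T', v, rfl⟩
    · right
      simp only [List.append_nil] at h
      exact ⟨h.2.symm, by simp [shiftS, hs']⟩
    · left
      exact ⟨_, by simp, hokT, h.2.symm, by simp [hs'], rfl⟩
  | pop1 =>
    left
    simp only [applyOp, pop1_snoc, Option.ite_none_right_eq_some, Option.some.injEq] at h ⊢
    refine ⟨T ++ [u.dropLast], by simp, ?_, ?_, by simpa using h.1, ?_⟩
    · intro v hv; simp at hv; rcases hv with hv | rfl
      · exact hokT v hv
      · intro x k hk; exact hoku x k (List.mem_of_mem_dropLast hk)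
    · rw [← h.2]; simp
    · simp [shiftS, List.map_dropLast]
  | collapse =>
    rcases List.eq_nil_or_concat u with rfl | ⟨u, x, rfl⟩
    · simp only [applyOp, collapse_nil] at h
      cases h
    simp only [List.concat_eq_append] at *
    rw [List.map_append, List.map_singleton]
    simp only [applyOp, collapse_snoc] at h ⊢
    rcases x with x | ⟨x, k⟩
    · left
      simp only [ite_some] at h
      simp only [shiftL, ite_some]
      refine ⟨T ++ [u], by simp, ?_, ?_, by simpa using h.1, ?_⟩
      · intro v hv; simp at hv; rcases hv with hv | rfl
        · exact hokT v hv
        · intro x k hk; exact hoku x k (by simp [hk])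
      · rw [← h.2]; simp
      · simp [shiftS]
    · simp only [Option.ite_none_right_eq_some, Option.some.injEq] at h
      obtain ⟨hk, h⟩ := h
      have hk' : s.length ≤ k := by
        rcases hoku x k (by simp) with h0 | h0 <;> omega
      obtain ⟨i, rfl⟩ := Nat.exists_eq_add_of_le hk'
      have hx : shiftL s.length s'.length (Sum.inr (x, s.length + i)) =
          (Sum.inr (x, s'.length + i) : Letter A) := by
        obtain ⟨m, hm⟩ : ∃ m, s.length + i = m + 1 := ⟨s.length + i - 1, by omega⟩
        rw [hm]; simp only [shiftL]; congr 2; omega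
      rw [hx]
      simp only [show 0 < s'.length + i by omega, if_true]
      rw [List.append_assoc, List.take_length_add_append] at h
      rw [List.append_assoc, List.take_length_add_append]
      rcases i with _ | i
      · right; simp at h; exact ⟨h.symm, by simp⟩
      · left
        refine ⟨_, ?_, ?_, h.symm, ?_⟩
        · simp
        · intro v hv
          exact hok v (by simpa using List.mem_of_mem_take hv)
        · simp [shiftS, List.map_take, hx]

theorem split_shift {S : CPS Q A Γ} (s s' : Stack2 A) (hs : s ≠ []) (hs' : s' ≠ [])
    {c d : Q × Stack2 A} {l} (h : Path S c l d) :
    ∀ T, T ≠ [] → c.2 = s ++ T → (∀ u ∈ T, LinkOK s.length u) →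
    (∃ y ∈ l ++ [d], y.2.length ≤ s.length) →
    ∃ l1 l2 e l1', l = l1 ++ l2 ∧ Path S c l1 (e, s) ∧ Path S (e, s) l2 d ∧
      (∀ x ∈ l1, s.length < x.2.length) ∧
      Path S (c.1, s' ++ shiftS s.length s'.length T) l1' (e, s') ∧
      (∀ x ∈ l1', s'.length < x.2.length) := by
  induction h with
  | nil c =>
    intro T hT hc _ ⟨y, hy, hl⟩
    simp at hy; subst hy
    rw [hc] at hl
    have := List.length_pos_iff.2 hT
    rw [List.length_append] at hl; omega
  | @cons c c1 d l hst hp ih =>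
    intro T hT hc hok ⟨y, hy, hl⟩
    have hTl := List.length_pos_iff.2 hT
    have hcl : s.length < c.2.length := by rw [hc, List.length_append]; omega
    obtain ⟨γ, op, σ, hσ, hΔ, hop⟩ := hst
    rw [hc] at hop hσ
    have hσ' : symS (s' ++ shiftS s.length s'.length T) = some σ := by
      rcases List.eq_nil_or_concat T with rfl | ⟨T, u, rfl⟩
      · exact absurd rfl hT
      · simp only [shiftS, List.concat_eq_append, List.map_append, List.map_singleton,
          ← List.append_assoc, symS_snoc] at hσ ⊢
        rw [← hσ, List.getLast?_map, Option.map_map]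
        congr 1
        funext x; exact symOf_shiftL _ _ x
    have hlen : s'.length < (s' ++ shiftS s.length s'.length T).length := by
      simp [shiftS]; omega
    have hcase := shift_step S.bot op s s' T c1.2 hs hs' hT hok hop
    rcases hcase with ⟨T2, hT2, hok2, heq, hop'⟩ | ⟨heq, hop'⟩
    · have hy' : ∃ y ∈ l ++ [d], y.2.length ≤ s.length := by
        refine ⟨y, ?_, hl⟩
        rw [List.cons_append, List.mem_cons] at hy
        rcases hy with rfl | hy
        · omega
        · exact hy
      obtain ⟨l1, l2, e, l1', h1, h2, h3, h4, h5, h6⟩ := ih T2 hT2 heq hok2 hy'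
      refine ⟨c :: l1, l2, e, _ :: l1', by simp [h1],
        Path.cons ⟨γ, op, σ, by rw [hc]; exact hσ, hΔ, by rw [hc]; exact hop⟩ h2, h3, ?_,
        Path.cons (d := (c1.1, s' ++ shiftS s.length s'.length T2)) ⟨γ, op, σ, hσ', hΔ, hop'⟩ h5, ?_⟩
      · simp only [List.mem_cons, forall_eq_or_imp]; exact ⟨hcl, h4⟩
      · simp only [List.mem_cons, forall_eq_or_imp]; exact ⟨hlen, h6⟩
    · obtain ⟨q1, t1⟩ := c1
      simp only at heq
      subst heq
      refine ⟨[c], l, q1, [_], rfl,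
        Path.cons ⟨γ, op, σ, by rw [hc]; exact hσ, hΔ, by rw [hc]; exact hop⟩ (Path.nil _),
        hp, by simpa using hcl, Path.cons (d := (q1, s')) ⟨γ, op, σ, hσ', hΔ, hop'⟩ (Path.nil _), ?_⟩
      simpa using hlen

/-! ## Every run of the shape of a return is a return -/

theorem RetShell.width {S : CPS Q A Γ} {ρ : Run S} {i j : ℕ} {s : Stack2 A} {v : Word A}
    (h : RetShell ρ i j) (hs : s ≠ []) (hi : ρ.stk i = s ++ [v]) (hv : ZeroW v) :
    ρ.stk j = s ∧ ∀ k, i ≤ k → k < j → s.length < (ρ.stk k).length := by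
  obtain ⟨hij, hj, hpop, hsub⟩ := h
  have hjs : ρ.stk j = s := by
    rw [hi, pop2_snoc, if_neg hs] at hpop
    exact (Option.some.inj hpop).symm
  refine ⟨hjs, ?_⟩
  have hp := ρ.path (j - i) i (by omega)
  rw [show i + (j - i) = j by omega] at hp
  obtain ⟨l1, l2, e, -, h1, h2, h3, h4, -, -⟩ :=
    split_shift s s hs hs hp [v] (by simp) hi
      (by intro u hu; simp at hu; subst hu; intro a k hk; exact Or.inl (hv a k hk))
      ⟨ρ.cfg j, by simp, by rw [show (ρ.cfg j).2 = s from hjs]⟩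
  have hl2 : l2 = [] := by
    rcases l2 with _ | ⟨y, l2⟩
    · rfl
    · exfalso
      have hy := h3.head
      have hmem : y ∈ (List.range' i (j - i)).map ρ.cfg := by rw [h1]; simp
      simp only [List.mem_map, List.mem_range'_1] at hmem
      obtain ⟨k, hk, hky⟩ := hmem
      apply hsub k (by omega) (by omega)
      have : ρ.stk k = s := by rw [Run.stk, hky, ← hy]
      rw [this, hjs]
      exact Substack.refl s
  intro k hk hkj
  apply h4 (ρ.cfg k)
  rw [hl2, List.append_nil] at h1
  rw [← h1]
  simp only [List.mem_map, List.mem_range'_1]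
  exact ⟨k, by omega, rfl⟩

def NoL (n : ℕ) (u : Word A) : Prop := ∀ a, Sum.inr (a, n) ∉ u

/-- Invariant used for the proof that shells are returns. -/
def RInv (n : ℕ) (v : Word A) (T : Stack2 A) : Prop :=
  (∀ u ∈ T, v <+: u ∨ NoL n u) ∧ ∃ u T', T = u :: T' ∧ v <+: u

theorem RInv.top {n : ℕ} {v u : Word A} {T : Stack2 A} (h : RInv n v (T ++ [u])) :
    (T = [] → v <+: u) ∧ (v <+: u ∨ NoL n u) := by
  refine ⟨?_, h.1 u (by simp)⟩
  rintro rfl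
  obtain ⟨_, u', T', h1, h2⟩ := h
  simp at h1
  rw [h1.1]; exact h2

theorem RInv.replace {n : ℕ} {v u u' : Word A} {T : Stack2 A} (h : RInv n v (T ++ [u]))
    (h1 : T = [] → v <+: u') (h2 : v <+: u' ∨ NoL n u') : RInv n v (T ++ [u']) := by
  obtain ⟨ha, u0, T', hb, hc⟩ := h
  refine ⟨?_, ?_⟩
  · intro x hx
    simp at hx
    rcases hx with hx | rfl
    · exact ha x (by simp [hx])
    · exact h2
  · rcases T with _ | ⟨y, T⟩
    · exact ⟨u', [], rfl, h1 rfl⟩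
    · simp at hb
      exact ⟨y, T ++ [u'], rfl, by rw [hb.1]; exact hc⟩

theorem prefix_dropLast {v u : Word A} (h : v <+: u) : u = v ∨ v <+: u.dropLast := by
  obtain ⟨x, rfl⟩ := h
  rcases List.eq_nil_or_concat x with rfl | ⟨x, y, rfl⟩
  · left; simp
  · right
    rw [List.concat_eq_append, ← List.append_assoc, List.dropLast_concat]
    exact List.prefix_append _ _

theorem RInv.step {b : A} {op : Op A} {s T t : Stack2 A} {v : Word A} (hs : s ≠ [])
    (hv : ZeroW v) (hT : RInv s.length v T) (h : applyOp b op (s ++ T) = some t)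
    (hw : s.length < t.length) (hne : 1 < v.length → t ≠ s ++ [v.dropLast]) (hv0 : v ≠ []) :
    ∃ T2, t = s ++ T2 ∧ RInv s.length v T2 := by
  have hpos : 0 < s.length := List.length_pos_iff.2 hs
  have hvpos : 0 < v.length := List.length_pos_iff.2 hv0
  rcases List.eq_nil_or_concat T with rfl | ⟨T, u, rfl⟩
  · obtain ⟨_, u, T', h1, h2⟩ := hT; simp at h1
  simp only [List.concat_eq_append, ← List.append_assoc] at h hT
  have htop := hT.top
  have hnv : NoL s.length v.dropLast := by
    intro a ha
    have := hv a _ (List.mem_of_mem_dropLast ha)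
    omega
  have hpop : ∀ u', u' = u.dropLast → 1 < u.length → t = s ++ T ++ [u'] →
      ∃ T2, t = s ++ T2 ∧ RInv s.length v T2 := by
    rintro u' rfl hul rfl
    refine ⟨T ++ [u.dropLast], by simp, hT.replace ?_ ?_⟩
    · rintro rfl
      rcases prefix_dropLast (htop.1 rfl) with rfl | h'
      · exfalso; exact hne hul (by simp)
      · exact h'
    · rcases htop.2 with h' | h'
      · rcases prefix_dropLast h' with rfl | h'
        · right; exact hnv
        · exact Or.inl h'
      · right; intro a ha; exact h' a (List.mem_of_mem_dropLast ha)
  cases op with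
  | clone2 =>
    simp only [applyOp, clone2_snoc, Option.some.injEq] at h
    refine ⟨T ++ [u] ++ [u], by rw [← h]; simp, ?_, ?_⟩
    · intro x hx
      apply hT.1
      simp at hx ⊢; exact hx
    · obtain ⟨_, u', T', h1, h2⟩ := hT
      exact ⟨u', T' ++ [u], by rw [h1]; simp, h2⟩
  | push1 a =>
    simp only [applyOp, push1_snoc, ite_some] at h
    refine ⟨T ++ [u ++ [Sum.inl a]], by rw [← h.2]; simp, hT.replace ?_ ?_⟩
    · intro h0; exact (htop.1 h0).trans (List.prefix_append _ _)
    · rcases htop.2 with h' | h'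
      · exact Or.inl (h'.trans (List.prefix_append _ _))
      · right; intro x hx; simp at hx; exact h' x hx
  | push2 a =>
    simp only [applyOp, push2_snoc, ite_some] at h
    refine ⟨T ++ [u ++ [Sum.inr (a, (s ++ T).length)]], by rw [← h.2]; simp,
      hT.replace ?_ ?_⟩
    · intro h0; exact (htop.1 h0).trans (List.prefix_append _ _)
    · by_cases h0 : T = []
      · exact Or.inl ((htop.1 h0).trans (List.prefix_append _ _))
      · rcases htop.2 with h' | h'
        · exact Or.inl (h'.trans (List.prefix_append _ _))
        · right; intro x hx; simp [h0] at hx; exact h' x hx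
  | pop2 =>
    simp only [applyOp, pop2_snoc, ite_some] at h
    refine ⟨T, h.2.symm, ?_, ?_⟩
    · intro x hx; exact hT.1 x (by simp [hx])
    · obtain ⟨_, u', T', h1, h2⟩ := hT
      rcases T with _ | ⟨y, T⟩
      · rw [← h.2] at hw; simp at hw
      · simp at h1
        exact ⟨y, T, rfl, by rw [h1.1]; exact h2⟩
  | pop1 =>
    simp only [applyOp, pop1_snoc, Option.ite_none_right_eq_some, Option.some.injEq] at h
    exact hpop _ rfl h.1 h.2.symm
  | collapse =>
    rcases List.eq_nil_or_concat u with rfl | ⟨u, x, rfl⟩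
    · simp only [applyOp, collapse_nil] at h
      cases h
    simp only [List.concat_eq_append] at *
    simp only [applyOp, collapse_snoc] at h
    rcases x with x | ⟨x, k⟩
    · simp only [ite_some] at h
      refine hpop u (by simp) ?_ h.2.symm
      have := List.length_pos_iff.2 h.1
      simp; omega
    · simp only [Option.ite_none_right_eq_some, Option.some.injEq] at h
      obtain ⟨hk, h⟩ := h
      have hk' : s.length < k := by
        rw [← h, List.length_take] at hw; omega
      obtain ⟨i, rfl⟩ := Nat.exists_eq_add_of_lt hk'
      rw [List.append_assoc, Nat.add_assoc, List.take_length_add_append] at h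
      refine ⟨_, h.symm, ?_, ?_⟩
      · intro y hy; exact hT.1 y (List.mem_of_mem_take hy)
      · obtain ⟨_, u', T', h1, h2⟩ := hT
        exact ⟨u', T'.take i, by rw [← Nat.add_assoc s.length i 1, h1]; simp, h2⟩

theorem ret_last {b : A} {op : Op A} {s T : Stack2 A} {v : Word A} (hs : s ≠ [])
    (hv : ZeroW v) (hT : RInv s.length v T) (h : applyOp b op (s ++ T) = some s) :
    op = Op.pop2 ∨ (op = Op.collapse ∧ ∃ w', top2 (s ++ T) = some w' ∧ v <+: w' ∧ v ≠ w') := by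
  have hpos : 0 < s.length := List.length_pos_iff.2 hs
  rcases List.eq_nil_or_concat T with rfl | ⟨T, u, rfl⟩
  · obtain ⟨_, u, T', h1, h2⟩ := hT; simp at h1
  simp only [List.concat_eq_append, ← List.append_assoc] at h hT ⊢
  have htop := hT.top
  cases op with
  | clone2 =>
    simp only [applyOp, clone2_snoc, Option.some.injEq] at h
    have := congrArg List.length h
    simp only [List.length_append, List.length_singleton] at this; omega
  | push1 a =>
    simp only [applyOp, push1_snoc, ite_some] at h
    have := congrArg List.length h.2
    simp only [List.length_append, List.length_singleton] at this; omega
  | push2 a =>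
    simp only [applyOp, push2_snoc, ite_some] at h
    have := congrArg List.length h.2
    simp only [List.length_append, List.length_singleton] at this; omega
  | pop2 => exact Or.inl rfl
  | pop1 =>
    simp only [applyOp, pop1_snoc, Option.ite_none_right_eq_some, Option.some.injEq] at h
    have := congrArg List.length h.2
    simp only [List.length_append, List.length_singleton] at this; omega
  | collapse =>
    right
    refine ⟨rfl, ?_⟩
    rcases List.eq_nil_or_concat u with rfl | ⟨u, x, rfl⟩
    · simp only [applyOp, collapse_nil] at h
      cases h
    simp only [List.concat_eq_append] at *
    simp only [applyOp, collapse_snoc] at h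
    rcases x with x | ⟨x, k⟩
    · simp only [ite_some] at h
      have := congrArg List.length h.2
      simp only [List.length_append, List.length_singleton] at this; omega
    · simp only [Option.ite_none_right_eq_some, Option.some.injEq] at h
      have hk : k = s.length := by
        have := congrArg List.length h.2
        simp only [List.length_append, List.length_singleton, List.length_take] at this; omega
      subst hk
      refine ⟨u ++ [Sum.inr (x, s.length)], by simp [top2], ?_, ?_⟩
      · rcases htop.2 with h' | h'
        · exact h'
        · exact absurd (by simp) (h' x)
      · rintro rfl
        have := hv x s.length (by simp)
        omega

theorem ret_of_shell {S : CPS Q A Γ} (ρ : Run S) (j : ℕ) (s : Stack2 A) (hs : s ≠ []) (n : ℕ) :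
    ∀ v : Word A, v.length = n → v ≠ [] → ZeroW v → ∀ i, ρ.stk i = s ++ [v] → RetShell ρ i j →
      RetSeg ρ i j := by
  induction n with
  | zero => intro v hv hv'; simp at hv; exact absurd hv hv'
  | succ n ih =>
    intro v hvn hv0 hv i hi hsh
    obtain ⟨hjs, hwid⟩ := hsh.width hs hi hv
    have hij := hsh.1
    by_cases hvis : ∃ k, i ≤ k ∧ k < j ∧ 1 < v.length ∧ ρ.stk k = s ++ [v.dropLast]
    · obtain ⟨k, hk, hkj, hvl, hks⟩ := hvis
      have hik : i < k := by
        rcases Nat.lt_or_ge i k with h | h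
        · exact h
        · exfalso
          have : k = i := by omega
          subst this
          rw [hi] at hks
          have := congrArg List.length (List.singleton_inj.1 (List.append_cancel_left hks))
          simp at this; omega
      refine RetSeg.sub hsh hik hkj.le (by rw [hi, pop1_snoc, if_pos hvl, hks]) ?_
      have hv' : v.dropLast ≠ [] := by
        intro h0
        have := congrArg List.length h0
        simp at this; omega
      refine ih v.dropLast (by simp [hvn]) hv'
        (fun a k hk => hv a k (List.mem_of_mem_dropLast hk)) k hks
        ⟨hkj, hsh.2.1, ?_, fun m hm hmj => hsh.2.2.2 m (by omega) hmj⟩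
      rw [hks, hjs, pop2_snoc, if_neg hs]
    · have hinv : ∀ m, i + m < j → ∃ T, ρ.stk (i + m) = s ++ T ∧ RInv s.length v T := by
        intro m
        induction m with
        | zero =>
          intro _
          refine ⟨[v], hi, ?_, v, [], rfl, List.prefix_rfl⟩
          intro u hu; simp at hu; subst hu; exact Or.inl List.prefix_rfl
        | succ m ihm =>
          intro hm
          obtain ⟨T, hT, hR⟩ := ihm (by omega)
          obtain ⟨σ, -, -, hop⟩ := ρ.ok (i + m) (by have := hsh.2.1; omega)
          rw [show (ρ.cfg (i + m)).2 = s ++ T from hT] at hop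
          exact RInv.step hs hv hR hop (hwid _ (by omega) hm)
            (fun hvl h0 => hvis ⟨i + m + 1, by omega, hm, hvl, h0⟩) hv0
      obtain ⟨T, hT, hR⟩ := hinv (j - 1 - i) (by omega)
      rw [show i + (j - 1 - i) = j - 1 by omega] at hT
      obtain ⟨σ, -, -, hop⟩ := ρ.ok (j - 1) (by have := hsh.2.1; omega)
      rw [show j - 1 + 1 = j by omega, show (ρ.cfg (j - 1)).2 = s ++ T from hT,
        show (ρ.cfg j).2 = s from hjs] at hop
      rcases ret_last hs hv hR hop with h | ⟨h, w', h1, h2, h3⟩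
      · exact RetSeg.pop2 hsh h
      · exact RetSeg.collapse hsh h ⟨v, w', by rw [hi]; simp [top2], by rw [hT]; exact h1, h2, h3⟩

theorem RetSeg.shell {S : CPS Q A Γ} {ρ : Run S} {i j : ℕ} (h : RetSeg ρ i j) :
    RetShell ρ i j := by
  cases h <;> assumption

/-! ## Path characterizations of the sets of returns and loops -/

theorem down0_zero (w : Word A) (h : ZeroW w) : down0 w = w := by
  induction w with
  | nil => rfl
  | cons x u ih =>
    have := ih (fun a k hk => h a k (List.mem_cons_of_mem _ hk))
    simp only [down0, List.map_cons] at this ⊢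
    rw [this]
    congr 1
    rcases x with x | ⟨x, k⟩
    · rfl
    · have := h x k (by simp)
      subst this; rfl

/-- Whenever the word `v` is on top, the width decreases below the current one later on. -/
def Good (v : Word A) : List (Q × Stack2 A) → Q × Stack2 A → Prop
  | [], _ => True
  | x :: l, c => (top2 x.2 = some v → ∃ y ∈ l ++ [c], y.2.length < x.2.length) ∧ Good v l c

theorem Good.append {v : Word A} {l l' : List (Q × Stack2 A)} {c : Q × Stack2 A}
    (h : ∀ x ∈ l, top2 x.2 = some v → ∃ y ∈ l' ++ [c], y.2.length < x.2.length)
    (h' : Good v l' c) : Good v (l ++ l') c := by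
  induction l with
  | nil => exact h'
  | cons x l ih =>
    refine ⟨?_, ih (fun x hx => h x (List.mem_cons_of_mem _ hx))⟩
    intro hx
    obtain ⟨y, hy, hyl⟩ := h x (by simp) hx
    exact ⟨y, by
      change y ∈ (l ++ l') ++ [c]
      rw [List.append_assoc]; exact List.mem_append_right _ hy, hyl⟩

theorem Good.of_append {v : Word A} {l l' : List (Q × Stack2 A)} {c : Q × Stack2 A}
    (h' : Good v (l ++ l') c) : Good v l' c := by
  induction l with
  | nil => exact h'
  | cons x l ih => exact ih h'.2

theorem good_run {S : CPS Q A Γ} (ρ : Run S) (v : Word A) (n : ℕ) : ∀ i,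
    Good v ((List.range' i n).map ρ.cfg) (ρ.cfg (i + n)) ↔
      ∀ k, i ≤ k → k < i + n → top2 (ρ.stk k) = some v →
        ∃ m, k < m ∧ m ≤ i + n ∧ (ρ.stk m).length < (ρ.stk k).length := by
  induction n with
  | zero => intro i; simp only [List.range'_zero, List.map_nil, Good, true_iff]; intros; omega
  | succ n ih =>
    intro i
    simp only [List.range'_succ, List.map_cons, Good]
    have hih := ih (i + 1)
    rw [show i + 1 + n = i + (n + 1) by omega] at hih
    rw [hih]
    have hmem : ∀ y, y ∈ (List.range' (i + 1) n).map ρ.cfg ++ [ρ.cfg (i + (n + 1))] ↔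
        ∃ m, i < m ∧ m ≤ i + (n + 1) ∧ ρ.cfg m = y := by
      intro y
      simp only [List.mem_append, List.mem_map, List.mem_range'_1, List.mem_singleton]
      constructor
      · rintro (⟨m, hm, rfl⟩ | rfl)
        · exact ⟨m, by omega, by omega, rfl⟩
        · exact ⟨_, by omega, le_rfl, rfl⟩
      · rintro ⟨m, h1, h2, rfl⟩
        rcases Nat.lt_or_ge m (i + (n + 1)) with h | h
        · exact Or.inl ⟨m, by omega, rfl⟩
        · right; congr 1; omega
    constructor
    · rintro ⟨h1, h2⟩ k hk hkn htop
      rcases Nat.eq_or_lt_of_le hk with rfl | hk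
      · obtain ⟨y, hy, hyl⟩ := h1 htop
        obtain ⟨m, hm1, hm2, rfl⟩ := (hmem y).1 hy
        exact ⟨m, hm1, hm2, hyl⟩
      · exact h2 k hk hkn htop
    · intro h
      refine ⟨?_, fun k hk hkn htop => h k (by omega) hkn htop⟩
      intro htop
      obtain ⟨m, h1, h2, h3⟩ := h i le_rfl (by omega) htop
      exact ⟨ρ.cfg m, (hmem _).2 ⟨m, h1, h2, rfl⟩, h3⟩

def RetP (S : CPS Q A Γ) (w : Word A) (q q' : Q) : Prop :=
  ∃ l, Path S (q, [w, w]) l (q', [w]) ∧ ∀ x ∈ l, 1 < x.2.length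

theorem mem_exRet [Nonempty Γ] (S : CPS Q A Γ) (w : Word A) (hw : ZeroW w) (hne : w ≠ [])
    (q q' : Q) : (q, q') ∈ ExRet S w ↔ RetP S w q q' := by
  simp only [ExRet, Set.mem_ofPred_eq, down0_zero w hw]
  constructor
  · rintro ⟨ρ, h0, h1, hr⟩
    have hp := ρ.path ρ.len 0 (by omega)
    rw [Nat.zero_add, h0, h1] at hp
    refine ⟨_, hp, ?_⟩
    have hwid := (hr.shell.width (s := [w]) (v := w) (by simp) (by rw [Run.stk, h0]; rfl) hw).2
    intro x hx
    simp only [List.mem_map, List.mem_range'_1] at hx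
    obtain ⟨k, hk, rfl⟩ := hx
    have := hwid k (by omega) (by omega)
    simpa [Run.stk] using this
  · rintro ⟨l, hp, hl⟩
    obtain ⟨ρ, h1, h2, h3, h4⟩ := hp.run
    refine ⟨ρ, h2, h4, ?_⟩
    refine ret_of_shell ρ ρ.len [w] (by simp) _ w rfl hne hw 0 (by rw [Run.stk, h2]; rfl) ?_
    have hs0 : ρ.stk 0 = [w] ++ [w] := by rw [Run.stk, h2]; rfl
    have hsl : ρ.stk ρ.len = [w] := by rw [Run.stk, h4]
    refine ⟨?_, le_rfl, ?_, ?_⟩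
    · rcases Nat.eq_zero_or_pos ρ.len with h | h
      · rw [h, hs0] at hsl; simp at hsl
      · exact h
    · rw [hs0, pop2_snoc, hsl]; simp
    · intro k _ hk hsub
      have := hl (ρ.cfg k) (by
        rw [← h3]; simp only [List.mem_map, List.mem_range'_1]; exact ⟨k, by omega, rfl⟩)
      have h5 := hsub.length
      rw [hsl] at h5
      simp only [Run.stk, List.length_singleton] at h5
      omega

def OneP (S : CPS Q A Γ) (w' w : Word A) (q q' : Q) : Prop :=
  ∃ l s', Path S (q, [w]) l (q', s' ++ [w]) ∧ Good w' l (q', s' ++ [w])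

theorem mem_exOneLoop [Nonempty Γ] (S : CPS Q A Γ) (w' : Word A) (σ : Letter A)
    (hw : ZeroW (w' ++ [σ])) (hne : w' ≠ [])
    (q q' : Q) : (q, q') ∈ ExOneLoop S (w' ++ [σ]) ↔ OneP S w' (w' ++ [σ]) q q' := by
  have hpos := List.length_pos_iff.2 hne
  have hw' : ZeroW w' := fun a k hk => hw a k (by simp [hk])
  simp only [ExOneLoop, Set.mem_ofPred_eq, down0_zero _ hw]
  constructor
  · rintro ⟨ρ, s', h0, h1, -, -, s, v, s'', h2, -, -, h5⟩
    have hp := ρ.path ρ.len 0 (by omega)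
    have hg := (good_run ρ w' ρ.len 0).2 (by
      intro k _ hk htop
      have hv : v = w' ++ [σ] := by
        rw [Run.stk, h0] at h2
        have := congrArg List.getLast? h2
        simp at this
        exact this.symm
      subst hv
      obtain ⟨m, hm1, hm2, hm3⟩ := h5 k (by omega) (by omega) (by simp; omega)
        (by simpa using htop)
      refine ⟨m, hm1, by omega, ?_⟩
      have := hm3.shell.2.2.1
      simp only [pop2] at this
      split at this
      · rw [← Option.some.inj this]; simp; omega
      · cases this)
    rw [Nat.zero_add, h1] at hg
    rw [Nat.zero_add, h0, h1] at hp
    exact ⟨_, s', hp, hg⟩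
  · rintro ⟨l, s', hp, hg⟩
    have hnn := hp.ne_nil (by simp)
    obtain ⟨ρ, h1, h2, h3, h4⟩ := hp.run
    refine ⟨ρ, s', h2, h4, by omega, le_rfl, [], w' ++ [σ], s', by simp [Run.stk, h2],
      by simp [Run.stk, h4], ?_, ?_⟩
    · intro k _ hk
      rw [List.length_nil, List.length_pos_iff]
      rcases Nat.lt_or_ge k ρ.len with h | h
      · apply hnn.2 (ρ.cfg k)
        rw [← h3]; simp only [List.mem_map, List.mem_range'_1]; exact ⟨k, by omega, rfl⟩
      · have : k = ρ.len := by omega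
        subst this
        rw [Run.stk, h4]; simp
    · intro k _ hk _ htop
      rw [List.dropLast_concat] at htop
      have hkl : k < ρ.len := by
        rcases Nat.lt_or_ge k ρ.len with h | h
        · exact h
        · have : k = ρ.len := by omega
          subst this
          rw [Run.stk, h4] at htop
          simp [top2] at htop
      have hg' := hg
      rw [← h3, ← h4] at hg'
      have hg2 := (good_run ρ w' ρ.len 0).1 (by rw [Nat.zero_add]; exact hg') k (by omega)
        (by omega) htop
      classical
      let P : ℕ → Prop := fun m => k < m ∧ m ≤ ρ.len ∧ (ρ.stk m).length < (ρ.stk k).length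
      have hex : ∃ m, P m := by
        obtain ⟨m, ha, hb, hc⟩ := hg2; exact ⟨m, ha, by omega, hc⟩
      obtain ⟨m, ⟨hm1, hm2, hm3⟩, hmin⟩ : ∃ m, P m ∧ ∀ m' < m, ¬ P m' :=
        ⟨Nat.find hex, Nat.find_spec hex, fun m' h => Nat.find_min hex h⟩
      refine ⟨m, hm1, hm2, ?_⟩
      obtain ⟨s, hs⟩ : ∃ s, ρ.stk k = s ++ [w'] := by
        rcases List.eq_nil_or_concat (ρ.stk k) with h | ⟨s, u, h⟩
        · rw [h] at htop; simp [top2] at htop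
        · rw [h] at htop; simp [top2] at htop
          exact ⟨s, by rw [h, List.concat_eq_append, htop]⟩
      have hmnn : ρ.stk m ≠ [] := by
        rcases Nat.lt_or_ge m ρ.len with h | h
        · apply hnn.2 (ρ.cfg m)
          rw [← h3]; simp only [List.mem_map, List.mem_range'_1]; exact ⟨m, by omega, rfl⟩
        · have : m = ρ.len := by omega
          subst this
          rw [Run.stk, h4]; simp
      have hmpos := List.length_pos_iff.2 hmnn
      have hsnn : s ≠ [] := by
        rintro rfl
        rw [hs] at hm3; simp at hm3; exact hmnn hm3
      have hwid : ∀ j, k ≤ j → j < m → s.length < (ρ.stk j).length := by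
        intro j hj hjm
        have hsk : (ρ.stk k).length = s.length + 1 := by rw [hs]; simp
        rcases Nat.eq_or_lt_of_le hj with rfl | hj
        · omega
        · by_contra hcon
          exact hmin j hjm ⟨hj, by omega, by omega⟩
      have hpm := ρ.path (m - k) k (by omega)
      rw [show k + (m - k) = m by omega] at hpm
      have hms : ρ.stk m = s := by
        obtain ⟨l1, l2, e, -, ha, hb, hc, hd, -, -⟩ :=
          split_shift s s hsnn hsnn hpm [w'] (by simp) hs
            (by intro u hu; simp at hu; subst hu; intro a k hk; exact Or.inl (hw' a k hk))
            ⟨ρ.cfg m, by simp, by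
              rw [hs] at hm3; simp only [List.length_append, List.length_singleton] at hm3
              simp only [Run.stk] at hm3; omega⟩
        rcases l2 with _ | ⟨y, l2⟩
        · rw [Run.stk, ← hc.eq_of_nil]
        · exfalso
          have hy := hc.head
          have hmem : y ∈ (List.range' k (m - k)).map ρ.cfg := by rw [ha]; simp
          simp only [List.mem_map, List.mem_range'_1] at hmem
          obtain ⟨j, hj, hjy⟩ := hmem
          have := hwid j (by omega) (by omega)
          rw [Run.stk, hjy, ← hy] at this
          simp at this
      refine ret_of_shell ρ m s hsnn _ w' rfl hne hw' k hs ⟨hm1, hm2, ?_, ?_⟩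
      · rw [hs, hms, pop2_snoc, if_neg hsnn]
      · intro j hj hjm hsub
        have := hsub.length
        rw [hms] at this
        have := hwid j hj hjm
        omega

/-! ### Loops -/

def CW (w : Word A) (x : Stack2 A) : Prop :=
  ∀ m, 0 < m → ∀ t, iter pop1 m [w] = some t → x = t → ∀ m', m' < m →
    ∃ t', iter pop1 m' [w] = some t' ∧ lvlS t' = some 1

theorem pop1_one (w' : Word A) (σ : Letter A) (hne : w' ≠ []) :
    pop1 [w' ++ [σ]] = some [w'] := by
  have := pop1_snoc [] (w' ++ [σ])
  have hpos := List.length_pos_iff.2 hne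
  rw [if_pos (by simp; omega)] at this
  simpa using this

theorem pop2_one (w : Word A) : pop2 [w] = none := by simp [pop2]

theorem iter_pop1_prefix (m : ℕ) : ∀ (w : Word A) (t : Stack2 A), iter pop1 m [w] = some t →
    ∃ u, t = [u] ∧ u <+: w := by
  induction m with
  | zero => intro w t h; simp [iter] at h; exact ⟨w, h.symm, List.prefix_rfl⟩
  | succ m ih =>
    intro w t h
    simp only [iter, Option.bind_eq_some_iff] at h
    obtain ⟨r, h1, h2⟩ := h
    have := pop1_snoc [] w
    rw [List.nil_append] at this
    rw [this] at h1
    simp only [Option.ite_none_right_eq_some, Option.some.injEq, List.nil_append] at h1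
    rw [← h1.2] at h2
    obtain ⟨u, hu, hp⟩ := ih _ _ h2
    exact ⟨u, hu, hp.trans (List.dropLast_prefix w)⟩

theorem cw_iff (w' : Word A) (σ : Letter A) (hne : w' ≠ []) (x : Stack2 A) :
    CW (w' ++ [σ]) x ↔ ((∃ m, iter pop1 m [w'] = some x) → lvlOf σ = 1) ∧ CW w' x := by
  have hit : ∀ m, iter pop1 (m + 1) [w' ++ [σ]] = iter pop1 m [w'] := by
    intro m; simp [iter, pop1_one w' σ hne]
  have hl : lvlS [w' ++ [σ]] = some (lvlOf σ) := by simp [lvlS, top1]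
  constructor
  · intro h
    refine ⟨?_, ?_⟩
    · rintro ⟨m, hm⟩
      obtain ⟨t', h1, h2⟩ := h (m + 1) (by omega) x (by rw [hit, hm]) rfl 0 (by omega)
      simp only [iter, Option.some.injEq] at h1
      rw [← h1, hl] at h2
      exact Option.some.inj h2
    · intro m hm t ht hx m' hm'
      have := h (m + 1) (by omega) t (by rw [hit, ht]) hx (m' + 1) (by omega)
      rwa [hit] at this
  · rintro ⟨h1, h2⟩ m hm t ht hx m' hm'
    obtain ⟨m, rfl⟩ : ∃ k, m = k + 1 := ⟨m - 1, by omega⟩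
    rw [hit] at ht
    rcases m' with _ | m'
    · exact ⟨_, rfl, by rw [hl, h1 ⟨m, by rw [ht, hx]⟩]⟩
    · rw [hit]
      exact h2 m (by omega) t ht hx m' (by omega)

theorem cw_self (w : Word A) : CW w [w] := by
  intro m hm t ht hx
  exfalso
  obtain ⟨m, rfl⟩ : ∃ k, m = k + 1 := ⟨m - 1, by omega⟩
  simp only [iter, Option.bind_eq_some_iff] at ht
  obtain ⟨r, h1, h2⟩ := ht
  have := pop1_snoc [] w
  rw [List.nil_append] at this
  rw [this] at h1
  simp only [Option.ite_none_right_eq_some, Option.some.injEq, List.nil_append] at h1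
  rw [← h1.2] at h2
  obtain ⟨u, hu, hp⟩ := iter_pop1_prefix _ _ _ h2
  rw [← hx] at hu
  simp at hu
  subst hu
  have := hp.length_le
  simp at this; omega

def LoopP (S : CPS Q A Γ) (w : Word A) (q q' : Q) : Prop :=
  ∃ l, Path S (q, [w]) l (q', [w]) ∧ ∀ x ∈ l, CW w x.2

theorem loopSeg_iff {S : CPS Q A Γ} (ρ : Run S) (w : Word A) (h0 : ρ.stk 0 = [w])
    (h1 : ρ.stk ρ.len = [w]) :
    LoopSeg ρ 0 ρ.len ↔ ∀ x ∈ (List.range' 0 ρ.len).map ρ.cfg, CW w x.2 := by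
  constructor
  · rintro ⟨-, -, -, -, h⟩ x hx
    simp only [List.mem_map, List.mem_range'_1] at hx
    obtain ⟨k, hk, rfl⟩ := hx
    have := h k (by omega) (by omega)
    rw [h0] at this
    exact this
  · intro h
    refine ⟨by omega, le_rfl, by rw [h0, h1], ?_, ?_⟩
    · intro k _ _ t ht
      rw [h0, pop2_one] at ht; cases ht
    · intro k _ hk
      rw [h0]
      rcases Nat.lt_or_ge k ρ.len with h' | h'
      · apply h (ρ.cfg k)
        simp only [List.mem_map, List.mem_range'_1]; exact ⟨k, by omega, rfl⟩
      · have : k = ρ.len := by omega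
        subst this
        rw [h1]
        exact cw_self w

theorem mem_exLoop [Nonempty Γ] (S : CPS Q A Γ) (w : Word A) (hw : ZeroW w) (q q' : Q) :
    (q, q') ∈ ExLoop S w ↔ LoopP S w q q' := by
  simp only [ExLoop, Set.mem_ofPred_eq, down0_zero w hw]
  constructor
  · rintro ⟨ρ, h0, h1, hr⟩
    have hp := ρ.path ρ.len 0 (by omega)
    rw [Nat.zero_add, h0, h1] at hp
    exact ⟨_, hp, (loopSeg_iff ρ w (by rw [Run.stk, h0]) (by rw [Run.stk, h1])).1 hr⟩
  · rintro ⟨l, hp, hl⟩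
    obtain ⟨ρ, h1, h2, h3, h4⟩ := hp.run
    exact ⟨ρ, h2, h4, (loopSeg_iff ρ w (by rw [Run.stk, h2]) (by rw [Run.stk, h4])).2
      (by rw [h3]; exact hl)⟩

/-! ### The bottom word -/

theorem bottom_step {b : A} {op : Op A} {u : Word A} {r t : Stack2 A}
    (h : applyOp b op (u :: r) = some t) :
    (∃ r', t = u :: r') ∨
      (r = [] ∧ ∃ u', t = [u'] ∧ (u' = u.dropLast ∨ ∃ a, u' = u ++ [a])) := by
  rcases List.eq_nil_or_concat r with rfl | ⟨r, v, rfl⟩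
  · have hu : [u] = [] ++ [u] := rfl
    rw [hu] at h
    cases op with
    | clone2 =>
      simp only [applyOp, clone2_snoc, Option.some.injEq] at h
      left; exact ⟨[u], h.symm⟩
    | push1 a =>
      simp only [applyOp, push1_snoc, ite_some] at h
      right; exact ⟨rfl, _, h.2.symm, Or.inr ⟨_, rfl⟩⟩
    | push2 a =>
      simp only [applyOp, push2_snoc, ite_some] at h
      right; exact ⟨rfl, _, h.2.symm, Or.inr ⟨_, rfl⟩⟩
    | pop2 => simp only [applyOp, pop2_snoc, ite_some] at h; exact absurd trivial h.1
    | pop1 =>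
      simp only [applyOp, pop1_snoc, Option.ite_none_right_eq_some, Option.some.injEq] at h
      right; exact ⟨rfl, _, h.2.symm, Or.inl rfl⟩
    | collapse =>
      rcases List.eq_nil_or_concat u with rfl | ⟨u, x, rfl⟩
      · simp only [applyOp, collapse_nil] at h
        cases h
      simp only [List.concat_eq_append] at *
      simp only [applyOp, collapse_snoc] at h
      rcases x with x | ⟨x, k⟩
      · simp only [ite_some] at h
        right; exact ⟨trivial, u, h.2.symm, Or.inl (by simp)⟩
      · simp only [Option.ite_none_right_eq_some, Option.some.injEq] at h
        obtain ⟨k, rfl⟩ : ∃ i, k = i + 1 := ⟨k - 1, by omega⟩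
        left; exact ⟨[], by rw [← h.2]; simp⟩
  · left
    rw [List.concat_eq_append, ← List.cons_append] at h
    cases op with
    | clone2 =>
      simp only [applyOp, clone2_snoc, Option.some.injEq] at h
      exact ⟨_, h.symm⟩
    | push1 a =>
      simp only [applyOp, push1_snoc, ite_some] at h
      exact ⟨_, h.2.symm⟩
    | push2 a =>
      simp only [applyOp, push2_snoc, ite_some] at h
      exact ⟨_, h.2.symm⟩
    | pop2 => simp only [applyOp, pop2_snoc, ite_some] at h; exact ⟨_, h.2.symm⟩
    | pop1 =>
      simp only [applyOp, pop1_snoc, Option.ite_none_right_eq_some, Option.some.injEq] at h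
      exact ⟨_, h.2.symm⟩
    | collapse =>
      rcases List.eq_nil_or_concat v with rfl | ⟨v, x, rfl⟩
      · simp only [applyOp, collapse_nil] at h
        cases h
      simp only [List.concat_eq_append] at *
      simp only [applyOp, collapse_snoc] at h
      rcases x with x | ⟨x, k⟩
      · simp only [ite_some] at h
        exact ⟨_, h.2.symm⟩
      · simp only [Option.ite_none_right_eq_some, Option.some.injEq] at h
        obtain ⟨k, rfl⟩ : ∃ i, k = i + 1 := ⟨k - 1, by omega⟩
        exact ⟨_, h.2.symm⟩

/-- First visit of `[w']` when starting above `w = w' ++ [σ]`. -/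
theorem visit_below {S : CPS Q A Γ} (w' : Word A) (σ : Letter A) {c d : Q × Stack2 A} {l}
    (h : Path S c l d) : ∀ u r, c.2 = u :: r → w' ++ [σ] <+: u →
    ((∀ x ∈ l ++ [d], ∃ u r, x.2 = u :: r ∧ w' ++ [σ] <+: u) ∨
    ∃ l1 l2 e f, l = l1 ++ (e, [w' ++ [σ]]) :: l2 ∧ Path S c l1 (e, [w' ++ [σ]]) ∧
      (∀ x ∈ l1, ∃ u r, x.2 = u :: r ∧ w' ++ [σ] <+: u) ∧
      Step S (e, [w' ++ [σ]]) (f, [w']) ∧ Path S (f, [w']) l2 d) := by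
  induction h with
  | nil c =>
    intro u r hc hu
    left; intro x hx; simp at hx; subst hx; exact ⟨u, r, hc, hu⟩
  | @cons c c1 d l hst hp ih =>
    intro u r hc hu
    have hst' := hst
    obtain ⟨γ, op, τ, hτ, hΔ, hop⟩ := hst
    rw [hc] at hop
    have key : (∃ u1 r1, c1.2 = u1 :: r1 ∧ w' ++ [σ] <+: u1) ∨
        (c.2 = [w' ++ [σ]] ∧ c1.2 = [w']) := by
      rcases bottom_step hop with ⟨r', hr'⟩ | ⟨rfl, u', hu', rfl | ⟨a, rfl⟩⟩
      · exact Or.inl ⟨u, r', hr', hu⟩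
      · rcases prefix_dropLast hu with rfl | h'
        · right; exact ⟨hc, by rw [hu']; simp⟩
        · exact Or.inl ⟨_, [], hu', h'⟩
      · exact Or.inl ⟨_, [], hu', hu.trans (List.prefix_append _ _)⟩
    rcases key with ⟨u1, r1, h1, h2⟩ | ⟨h1, h2⟩
    · rcases ih u1 r1 h1 h2 with h | ⟨l1, l2, e, f, ha, hb, hc', hd, he⟩
      · left
        intro x hx
        rw [List.cons_append, List.mem_cons] at hx
        rcases hx with rfl | hx
        · exact ⟨u, r, hc, hu⟩
        · exact h x hx
      · right
        refine ⟨c :: l1, l2, e, f, by rw [ha]; rfl, Path.cons hst' hb, ?_, hd, he⟩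
        intro x hx
        rw [List.mem_cons] at hx
        rcases hx with rfl | hx
        · exact ⟨u, r, hc, hu⟩
        · exact hc' x hx
    · right
      obtain ⟨q, s⟩ := c
      obtain ⟨q1, s1⟩ := c1
      simp only at h1 h2
      subst h1 h2
      exact ⟨[], l, q, q1, rfl, Path.nil _, by simp, hst', hp⟩

/-- First visit of `[w]` when starting with a bottom word that does not extend `w`. -/
theorem visit_above {S : CPS Q A Γ} (w' : Word A) (σ : Letter A) {c d : Q × Stack2 A} {l}
    (h : Path S c l d) (hd : d.2 = [w' ++ [σ]]) : ∀ u r, c.2 = u :: r → ¬ w' ++ [σ] <+: u →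
    ∃ l1 l2 e f, l = l1 ++ (e, [w']) :: l2 ∧ Path S c l1 (e, [w']) ∧
      Step S (e, [w']) (f, [w' ++ [σ]]) ∧ Path S (f, [w' ++ [σ]]) l2 d := by
  induction h with
  | nil c =>
    intro u r hc hu
    rw [hd] at hc
    simp at hc
    rw [← hc.1] at hu
    exact absurd List.prefix_rfl hu
  | @cons c c1 d l hst hp ih =>
    intro u r hc hu
    have hst' := hst
    obtain ⟨γ, op, τ, hτ, hΔ, hop⟩ := hst
    rw [hc] at hop
    have key : (∃ u1 r1, c1.2 = u1 :: r1 ∧ ¬ w' ++ [σ] <+: u1) ∨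
        (c.2 = [w'] ∧ c1.2 = [w' ++ [σ]]) := by
      rcases bottom_step hop with ⟨r', hr'⟩ | ⟨rfl, u', hu', rfl | ⟨a, rfl⟩⟩
      · exact Or.inl ⟨u, r', hr', hu⟩
      · exact Or.inl ⟨_, [], hu', fun h => hu (h.trans (List.dropLast_prefix u))⟩
      · by_cases h' : w' ++ [σ] <+: u ++ [a]
        · right
          rcases prefix_dropLast h' with h'' | h''
          · have := List.append_inj' h'' rfl
            exact ⟨by rw [hc, this.1], by rw [hu', h'']⟩
          · rw [List.dropLast_concat] at h''
            exact absurd h'' hu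
        · exact Or.inl ⟨_, [], hu', h'⟩
    rcases key with ⟨u1, r1, h1, h2⟩ | ⟨h1, h2⟩
    · obtain ⟨l1, l2, e, f, ha, hb, hd', he⟩ := ih hd u1 r1 h1 h2
      exact ⟨c :: l1, l2, e, f, by rw [ha]; rfl, Path.cons hst' hb, hd', he⟩
    · obtain ⟨q, s⟩ := c
      obtain ⟨q1, s1⟩ := c1
      simp only at h1 h2
      subst h1 h2
      exact ⟨[], l, q, q1, rfl, Path.nil _, hst', hp⟩

/-! ### High and low loops -/

def HighP (S : CPS Q A Γ) (w' w : Word A) (q q' : Q) : Prop :=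
  ∃ l, Path S (q, [w]) l (q', [w]) ∧ Good w' l (q', [w])

theorem good_of_ne {w' w : Word A} {q' : Q} : ∀ {l : List (Q × Stack2 A)},
    (∀ x ∈ l, x.2 ≠ [w']) → Good w' l (q', [w])
  | [], _ => trivial
  | x :: l, h => by
    refine ⟨?_, good_of_ne fun y hy => h y (List.mem_cons_of_mem _ hy)⟩
    intro htop
    refine ⟨(q', [w]), by simp, ?_⟩
    have hx := h x (by simp)
    rcases List.eq_nil_or_concat x.2 with h0 | ⟨s, u, h0⟩
    · rw [h0] at htop; simp [top2] at htop
    · rw [h0] at htop hx ⊢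
      simp [top2] at htop
      subst htop
      rcases s with _ | ⟨y, s⟩
      · simp at hx
      · simp

theorem ne_of_good {w' : Word A} {c : Q × Stack2 A} (hc : c.2 ≠ []) :
    ∀ {l : List (Q × Stack2 A)}, (∀ x ∈ l, x.2 ≠ []) → Good w' l c → ∀ x ∈ l, x.2 ≠ [w']
  | [], _, _ => by simp
  | y :: l, hne, h => by
    intro x hx
    rw [List.mem_cons] at hx
    rcases hx with rfl | hx
    · intro h0
      obtain ⟨z, hz, hzl⟩ := h.1 (by rw [h0]; rfl)
      rw [h0] at hzl
      simp at hzl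
      simp at hz
      rcases hz with hz | rfl
      · exact hne z (List.mem_cons_of_mem _ hz) hzl
      · exact hc hzl
    · exact ne_of_good hc (fun z hz => hne z (List.mem_cons_of_mem _ hz)) h.2 x hx

theorem cw_of_above {w' : Word A} {σ : Letter A} {x : Stack2 A} (hne : w' ≠ [])
    (h : ∃ u r, x = u :: r ∧ w' ++ [σ] <+: u) : CW (w' ++ [σ]) x := by
  obtain ⟨u, r, rfl, hu⟩ := h
  intro m hm t ht hx
  exfalso
  obtain ⟨m, rfl⟩ : ∃ k, m = k + 1 := ⟨m - 1, by omega⟩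
  simp only [iter, pop1_one w' σ hne, Option.bind_some] at ht
  obtain ⟨v, hv, hp⟩ := iter_pop1_prefix _ _ _ ht
  rw [hv] at hx
  simp at hx
  rw [hx.1] at hu
  have h1 := hu.length_le
  have h2 := hp.length_le
  simp at h1; omega

theorem HighP.above {S : CPS Q A Γ} {w' : Word A} {σ : Letter A} {q q' : Q} {l}
    (hp : Path S (q, [w' ++ [σ]]) l (q', [w' ++ [σ]])) (hl : ∀ x ∈ l, x.2 ≠ [w']) :
    ∀ x ∈ l, ∃ u r, x.2 = u :: r ∧ w' ++ [σ] <+: u := by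
  rcases visit_below w' σ hp _ _ rfl List.prefix_rfl with h | ⟨l1, l2, e, f, ha, hb, hc, hd, he⟩
  · exact fun x hx => h x (by simp [hx])
  · exfalso
    rcases l2 with _ | ⟨y, l2⟩
    · have := he.eq_of_nil
      simp at this
    · have := he.head
      apply hl y (by rw [ha]; simp)
      rw [← this]

theorem HighP.loop {S : CPS Q A Γ} {w' : Word A} {σ : Letter A} {q q' : Q} (hne : w' ≠ [])
    (h : HighP S w' (w' ++ [σ]) q q') : LoopP S (w' ++ [σ]) q q' := by
  obtain ⟨l, hp, hg⟩ := h
  have hnn := hp.ne_nil (by simp)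
  exact ⟨l, hp, fun x hx => cw_of_above hne
    (HighP.above hp (ne_of_good hnn.1 hnn.2 hg) x hx)⟩

theorem mem_exHLoop [Nonempty Γ] (S : CPS Q A Γ) (w' : Word A) (σ : Letter A)
    (hw : ZeroW (w' ++ [σ])) (hne : w' ≠ [])
    (q q' : Q) : (q, q') ∈ ExHLoop S (w' ++ [σ]) ↔ HighP S w' (w' ++ [σ]) q q' := by
  simp only [ExHLoop, Set.mem_ofPred_eq, down0_zero _ hw]
  constructor
  · rintro ⟨ρ, h0, h1, -, hr⟩
    have hp := ρ.path ρ.len 0 (by omega)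
    rw [Nat.zero_add, h0, h1] at hp
    refine ⟨_, hp, good_of_ne ?_⟩
    intro x hx
    simp only [List.mem_map, List.mem_range'_1] at hx
    obtain ⟨k, hk, rfl⟩ := hx
    exact hr k (by omega) (by omega) [w'] (by rw [Run.stk, h0]; exact pop1_one w' σ hne)
  · intro h
    have h' := h
    obtain ⟨l, hp, hg⟩ := h
    have hnn := hp.ne_nil (by simp)
    have hl := ne_of_good hnn.1 hnn.2 hg
    obtain ⟨ρ, h1, h2, h3, h4⟩ := hp.run
    refine ⟨ρ, h2, h4, (loopSeg_iff ρ _ (by rw [Run.stk, h2]) (by rw [Run.stk, h4])).2 ?_, ?_⟩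
    · rw [h3]
      exact fun x hx => cw_of_above hne (HighP.above hp hl x hx)
    · intro k _ hk t ht
      rw [Run.stk, h2, pop1_one w' σ hne] at ht
      rw [← Option.some.inj ht]
      rcases Nat.lt_or_ge k ρ.len with h | h
      · apply hl (ρ.cfg k)
        rw [← h3]; simp only [List.mem_map, List.mem_range'_1]; exact ⟨k, by omega, rfl⟩
      · have : k = ρ.len := by omega
        subst this
        rw [Run.stk, h4]; simp

def LowP (S : CPS Q A Γ) (w' : Word A) (σ : Letter A) (q q' : Q) : Prop :=
  lvlOf σ = 1 ∧ ∃ q1 q2, Step S (q, [w' ++ [σ]]) (q1, [w']) ∧ LoopP S w' q1 q2 ∧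
    Step S (q2, [w']) (q', [w' ++ [σ]])

theorem LowP.path {S : CPS Q A Γ} {w' : Word A} {σ : Letter A} {q q' : Q} (hne : w' ≠ [])
    (h : LowP S w' σ q q') : ∃ l q1 q2, Path S (q, [w' ++ [σ]])
      ((q, [w' ++ [σ]]) :: l ++ [(q2, [w'])]) (q', [w' ++ [σ]]) ∧
      (l ++ [(q2, [w'])]).head? = some (q1, [w']) ∧
      ∀ x ∈ ((q, [w' ++ [σ]]) :: l ++ [(q2, [w'])]), CW (w' ++ [σ]) x.2 := by
  obtain ⟨hσ, q1, q2, h1, ⟨l, hp, hl⟩, h2⟩ := h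
  refine ⟨l, q1, q2, Path.cons h1 (hp.append (Path.cons h2 (Path.nil _))), ?_, ?_⟩
  · rcases l with _ | ⟨y, l⟩
    · rw [hp.eq_of_nil]; rfl
    · rw [hp.head]; rfl
  · intro x hx
    simp only [List.cons_append, List.mem_cons, List.mem_append, List.mem_nil_iff, or_false] at hx
    rcases hx with rfl | hx | rfl
    · exact cw_self _
    · exact (cw_iff w' σ hne _).2 ⟨fun _ => hσ, hl x hx⟩
    · exact (cw_iff w' σ hne _).2 ⟨fun _ => hσ, cw_self _⟩

theorem mem_exLLoop [Nonempty Γ] (S : CPS Q A Γ) (w' : Word A) (σ : Letter A)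
    (hw : ZeroW (w' ++ [σ])) (hne : w' ≠ [])
    (q q' : Q) : (q, q') ∈ ExLLoop S (w' ++ [σ]) ↔ LowP S w' σ q q' := by
  simp only [ExLLoop, Set.mem_ofPred_eq, down0_zero _ hw]
  constructor
  · rintro ⟨ρ, h0, h1, hloop, hlen, t, ht, ht1, ht2⟩
    have hs0 : ρ.stk 0 = [w' ++ [σ]] := by rw [Run.stk, h0]
    have hs1 : ρ.stk ρ.len = [w' ++ [σ]] := by rw [Run.stk, h1]
    rw [hs0, pop1_one w' σ hne] at ht
    have ht := (Option.some.inj ht).symm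
    subst ht
    have hlen2 : 2 ≤ ρ.len := by
      rcases Nat.lt_or_ge 1 ρ.len with h | h
      · exact h
      · exfalso
        have : ρ.len = 1 := by omega
        rw [this, hs0] at ht2
        simp at ht2
    have hcw := (loopSeg_iff ρ _ hs0 hs1).1 hloop
    have hcw' : ∀ k, k < ρ.len → CW (w' ++ [σ]) (ρ.stk k) := by
      intro k hk
      apply hcw (ρ.cfg k)
      simp only [List.mem_map, List.mem_range'_1]; exact ⟨k, by omega, rfl⟩
    have e1 : ρ.cfg 1 = ((ρ.cfg 1).1, [w']) := Prod.ext rfl ht1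
    have e2 : ρ.cfg (ρ.len - 1) = ((ρ.cfg (ρ.len - 1)).1, [w']) := Prod.ext rfl ht2
    have st1 : Step S (ρ.cfg 0) (ρ.cfg 1) := ⟨_, _, ρ.ok 0 (by omega)⟩
    have st2 : Step S (ρ.cfg (ρ.len - 1)) (ρ.cfg (ρ.len - 1 + 1)) :=
      ⟨_, _, ρ.ok (ρ.len - 1) (by omega)⟩
    rw [show ρ.len - 1 + 1 = ρ.len by omega] at st2
    rw [h0, e1] at st1
    rw [h1, e2] at st2
    have hp := ρ.path (ρ.len - 2) 1 (by omega)
    rw [show 1 + (ρ.len - 2) = ρ.len - 1 by omega, e1, e2] at hp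
    refine ⟨?_, _, _, st1, ⟨_, hp, ?_⟩, st2⟩
    · have := ((cw_iff w' σ hne _).1 (hcw' 1 (by omega))).1
      exact this ⟨0, by simp [iter]; exact ht1.symm⟩
    · intro x hx
      simp only [List.mem_map, List.mem_range'_1] at hx
      obtain ⟨k, hk, rfl⟩ := hx
      exact ((cw_iff w' σ hne _).1 (hcw' k (by omega))).2
  · intro h
    obtain ⟨l, q1, q2, hp, hhd, hl⟩ := h.path hne
    obtain ⟨ρ, h1, h2, h3, h4⟩ := hp.run
    have hs0 : ρ.stk 0 = [w' ++ [σ]] := by rw [Run.stk, h2]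
    have hs1 : ρ.stk ρ.len = [w' ++ [σ]] := by rw [Run.stk, h4]
    have hlen : ρ.len = l.length + 2 := by rw [h1]; simp
    have hget : ∀ k, k < ρ.len →
        ((q, [w' ++ [σ]]) :: l ++ [(q2, [w'])])[k]? = some (ρ.cfg k) := by
      intro k hk
      rw [← h3]; simp [hk]
    refine ⟨ρ, h2, h4, (loopSeg_iff ρ _ hs0 hs1).2 (by rw [h3]; exact hl), by omega, [w'],
      by rw [hs0]; exact pop1_one w' σ hne, ?_, ?_⟩
    · have := hget 1 (by omega)
      rw [List.cons_append, List.getElem?_cons_succ, ← List.head?_eq_getElem?, hhd] at this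
      rw [Run.stk, ← Option.some.inj this]
    · have := hget (l.length + 1) (by omega)
      rw [List.cons_append, List.getElem?_cons_succ] at this
      simp at this
      rw [Run.stk, hlen, show l.length + 2 - 1 = l.length + 1 by omega, ← this]

/-! ## Simulation between two words with the same top letter -/

theorem map_ne_pop {w' : Word A} {σ : Letter A} {xs : Stack2 A} (hxs : xs ≠ []) :
    top2 (xs.map (w' ++ [σ] ++ ·)) ≠ some w' := by
  rcases List.eq_nil_or_concat xs with rfl | ⟨xs, u, rfl⟩
  · exact absurd rfl hxs
  · intro h
    simp [top2] at h

theorem symS_ext {w1' w2' : Word A} {σ : Letter A} {xs : Stack2 A} :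
    symS (xs.map (w1' ++ [σ] ++ ·)) = symS (xs.map (w2' ++ [σ] ++ ·)) := by
  rcases List.eq_nil_or_concat xs with rfl | ⟨xs, u, rfl⟩
  · rfl
  · simp only [List.concat_eq_append, List.map_append, List.map_singleton, symS_snoc]
    rcases List.eq_nil_or_concat u with rfl | ⟨u, x, rfl⟩
    · simp
    · simp [← List.append_assoc]

theorem ext_step (b : A) (op : Op A) {w1' w2' : Word A} {σ : Letter A} (hne1 : w1' ≠ [])
    (hne2 : w2' ≠ []) (hz : ZeroW (w1' ++ [σ])) {xs t : Stack2 A} (hxs : xs ≠ [])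
    (h : applyOp b op (xs.map (w1' ++ [σ] ++ ·)) = some t) :
    (∃ ys, ys ≠ [] ∧ t = ys.map (w1' ++ [σ] ++ ·) ∧
      applyOp b op (xs.map (w2' ++ [σ] ++ ·)) = some (ys.map (w2' ++ [σ] ++ ·))) ∨
    (∃ xs0, xs = xs0 ++ [[]] ∧ t = xs0.map (w1' ++ [σ] ++ ·) ++ [w1'] ∧
      applyOp b op (xs.map (w2' ++ [σ] ++ ·)) =
        some (xs0.map (w2' ++ [σ] ++ ·) ++ [w2'])) := by
  have hp1 := List.length_pos_iff.2 hne1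
  have hp2 := List.length_pos_iff.2 hne2
  rcases List.eq_nil_or_concat xs with rfl | ⟨xs, u, rfl⟩
  · exact absurd rfl hxs
  simp only [List.concat_eq_append, List.map_append, List.map_singleton] at h ⊢
  cases op with
  | clone2 =>
    left
    simp only [applyOp, clone2_snoc, Option.some.injEq] at h ⊢
    exact ⟨xs ++ [u] ++ [u], by simp, by rw [← h]; simp, by simp⟩
  | push1 a =>
    left
    simp only [applyOp, push1_snoc, ite_some] at h ⊢
    exact ⟨xs ++ [u ++ [Sum.inl a]], by simp, by rw [← h.2]; simp, h.1, by simp⟩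
  | push2 a =>
    left
    simp only [applyOp, push2_snoc, ite_some] at h ⊢
    exact ⟨xs ++ [u ++ [Sum.inr (a, xs.length)]], by simp, by rw [← h.2]; simp, h.1, by simp⟩
  | pop2 =>
    left
    simp only [applyOp, pop2_snoc, ite_some] at h ⊢
    exact ⟨xs, by simpa using h.1, h.2.symm, by simpa using h.1, rfl⟩
  | pop1 =>
    simp only [applyOp, pop1_snoc, Option.ite_none_right_eq_some, Option.some.injEq] at h ⊢
    rcases List.eq_nil_or_concat u with rfl | ⟨u, x, rfl⟩
    · right
      exact ⟨xs, by simp, by rw [← h.2]; simp, by simp; omega, by simp⟩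
    · left
      refine ⟨xs ++ [u], by simp, ?_, by simp; omega, ?_⟩
      · rw [← h.2]; simp only [List.concat_eq_append, ← List.append_assoc, List.dropLast_concat]
        simp
      · simp only [List.concat_eq_append, ← List.append_assoc, List.dropLast_concat]
        simp
  | collapse =>
    rcases List.eq_nil_or_concat u with rfl | ⟨u, x, rfl⟩
    · right
      simp only [List.append_nil, applyOp, collapse_snoc] at h ⊢
      rcases σ with a | ⟨a, k⟩
      · simp only [ite_some] at h ⊢
        exact ⟨xs, rfl, h.2.symm, hne2, rfl⟩
      · have := hz a k (by simp)
        subst this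
        simp at h
    · left
      simp only [List.concat_eq_append, ← List.append_assoc, applyOp, collapse_snoc] at h ⊢
      rcases x with a | ⟨a, k⟩
      · simp only [ite_some] at h ⊢
        exact ⟨xs ++ [u], by simp, by rw [← h.2]; simp, by simp, by simp⟩
      · simp only [Option.ite_none_right_eq_some, Option.some.injEq] at h ⊢
        refine ⟨(xs ++ [u ++ [Sum.inr (a, k)]]).take k, ?_, ?_, h.1, ?_⟩
        · intro h0
          rw [List.take_eq_nil_iff] at h0
          rcases h0 with h0 | h0
          · omega
          · simp at h0
        · rw [← h.2, List.map_take]; simp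
        · rw [List.map_take]; simp

theorem ret_embed {S : CPS Q A Γ} {w : Word A} (hz : ZeroW w) {q q' : Q} (h : RetP S w q q')
    (s : Stack2 A) (hs : s ≠ []) :
    ∃ l, Path S (q, s ++ [w]) l (q', s) ∧ ∀ x ∈ l, s.length < x.2.length := by
  obtain ⟨l, hp, hl⟩ := h
  obtain ⟨l1, l2, e, l1', h1, h2, h3, h4, h5, h6⟩ := split_shift [w] s (by simp) hs hp [w]
    (by simp) rfl (by intro u hu; simp at hu; subst hu; exact fun a k hk => Or.inl (hz a k hk))
    ⟨(q', [w]), by simp, by simp⟩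
  have : l2 = [] := by
    rcases l2 with _ | ⟨y, l2⟩
    · rfl
    · have h7 := h3.head
      have h8 := hl y (by rw [h1]; simp)
      rw [← h7] at h8
      simp at h8
  subst this
  have := h3.eq_of_nil
  simp at this
  subst this
  simp only [shiftS, List.map_singleton, shiftW_zero _ _ _ hz] at h5
  exact ⟨l1', h5, h6⟩

theorem sim {S : CPS Q A Γ} {w1' w2' : Word A} {σ : Letter A} (hne1 : w1' ≠ [])
    (hne2 : w2' ≠ []) (hz1 : ZeroW (w1' ++ [σ])) (hz2 : ZeroW (w2' ++ [σ]))
    (hret : ∀ q q', RetP S w1' q q' → RetP S w2' q q') (N : ℕ) : ∀ n, ∀ l, l.length ≤ n →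
    ∀ q xs (d : Q × Stack2 A), xs ≠ [] → Path S (q, xs.map (w1' ++ [σ] ++ ·)) l d →
    top2 d.2 ≠ some w1' → Good w1' l d → (∀ x ∈ l, N < x.2.length) →
    ∃ ys l2, ys ≠ [] ∧ d.2 = ys.map (w1' ++ [σ] ++ ·) ∧
      Path S (q, xs.map (w2' ++ [σ] ++ ·)) l2 (d.1, ys.map (w2' ++ [σ] ++ ·)) ∧
      Good w2' l2 (d.1, ys.map (w2' ++ [σ] ++ ·)) ∧ ∀ x ∈ l2, N < x.2.length := by
  have hz1' : ZeroW w1' := fun a k hk => hz1 a k (by simp [hk])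
  have hz2' : ZeroW w2' := fun a k hk => hz2 a k (by simp [hk])
  intro n
  induction n with
  | zero =>
    intro l hl q xs d hxs hp hd hg hN
    have : l = [] := List.length_eq_zero_iff.1 (by omega)
    subst this
    have := hp.eq_of_nil
    subst this
    exact ⟨xs, [], hxs, rfl, Path.nil _, trivial, by simp⟩
  | succ n ih =>
    intro l hl q xs d hxs hp hd hg hN
    cases hp with
    | nil => exact ⟨xs, [], hxs, rfl, Path.nil _, trivial, by simp⟩
    | @cons _ c1 _ l hst hp =>
      simp only [List.length_cons] at hl
      have hN0 := hN _ (List.mem_cons_self)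
      have hN' : ∀ x ∈ l, N < x.2.length := fun x hx => hN x (List.mem_cons_of_mem _ hx)
      obtain ⟨γ, op, τ, hτ, hΔ, hop⟩ := hst
      obtain ⟨q1, t⟩ := c1
      simp only at hτ hΔ hop
      rw [symS_ext (w2' := w2')] at hτ
      rcases ext_step S.bot op hne1 hne2 hz1 hxs hop with ⟨ys, hys, rfl, hop2⟩ |
        ⟨xs0, rfl, rfl, hop2⟩
      · obtain ⟨zs, l2, ha, hb, hc, he, hf⟩ := ih l (by omega) q1 ys d hys hp hd hg.2 hN'
        refine ⟨zs, _ :: l2, ha, hb, Path.cons ⟨γ, op, τ, hτ, hΔ, hop2⟩ hc, ⟨?_, he⟩, ?_⟩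
        · intro h; exact absurd h (map_ne_pop hxs)
        · intro x hx
          rw [List.mem_cons] at hx
          rcases hx with rfl | hx
          · simpa using hN0
          · exact hf x hx
      · have hg2 := hg.2
        have hlow : ∃ y ∈ l ++ [d], y.2.length ≤ xs0.length := by
          rcases l with _ | ⟨y, l⟩
          · have := hp.eq_of_nil
            subst this
            simp [top2] at hd
          · have := hp.head
            subst this
            obtain ⟨z, hz, hzl⟩ := hg2.1 (by simp [top2])
            simp at hzl
            refine ⟨z, ?_, by omega⟩
            rw [List.cons_append]; exact List.mem_cons_of_mem _ hz
        have hxs0 : xs0 ≠ [] := by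
          rintro rfl
          obtain ⟨y, hy, hyl⟩ := hlow
          have hnn := hp.ne_nil (by simp)
          simp at hyl hy
          rcases hy with hy | rfl
          · exact hnn.2 y hy hyl
          · exact hnn.1 hyl
        obtain ⟨la, lb, e, l1', h1, h2, h3, h4, h5, h6⟩ :=
          split_shift (xs0.map (w1' ++ [σ] ++ ·)) [w1'] (by simpa using hxs0) (by simp) hp [w1']
            (by simp) rfl (by
              intro u hu; simp at hu; subst hu; exact fun a k hk => Or.inl (hz1' a k hk))
            (by simpa using hlow)
        simp only [shiftS, List.map_singleton, shiftW_zero _ _ _ hz1'] at h5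
        have hR : RetP S w2' q1 e := hret _ _ ⟨l1', h5, by simpa using h6⟩
        obtain ⟨m, hm1, hm2⟩ := ret_embed hz2' hR (xs0.map (w2' ++ [σ] ++ ·)) (by simpa using hxs0)
        rw [h1] at hg2
        obtain ⟨zs, l2, ha, hb, hc, he, hf⟩ := ih lb (by
            have := congrArg List.length h1
            rw [List.length_append] at this; omega) e xs0 d hxs0 h3 hd hg2.of_append
            (fun x hx => hN' x (by rw [h1]; simp [hx]))
        refine ⟨zs, _ :: (m ++ l2), ha, hb, Path.cons ⟨γ, op, τ, hτ, hΔ, hop2⟩ (hm1.append hc),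
          ⟨?_, ?_⟩, ?_⟩
        · intro h; exact absurd h (map_ne_pop hxs)
        · refine Good.append ?_ he
          intro x hx _
          have := hm2 x hx
          rcases l2 with _ | ⟨y, l2⟩
          · have h7 := hc.eq_of_nil
            refine ⟨_, List.mem_singleton.2 rfl, ?_⟩
            rw [← h7]; exact this
          · have h7 := hc.head
            refine ⟨y, by simp, ?_⟩
            rw [← h7]; exact this
        · intro x hx
          simp only [List.length_map, List.length_append, List.length_singleton] at hN0
          rw [List.mem_cons, List.mem_append] at hx
          rcases hx with rfl | hx | hx
          · simpa using hN0
          · have := hm2 x hx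
            simp only [List.length_map] at this
            omega
          · exact hf x hx

section Transfer

variable {S : CPS Q A Γ} {w1' w2' : Word A} {σ : Letter A}

theorem good_one {v : Word A} {c : Q × Stack2 A} (hc : c.2.length ≤ 1) :
    ∀ {l : List (Q × Stack2 A)}, (∀ x ∈ l, 1 < x.2.length) → Good v l c
  | [], _ => trivial
  | x :: l, h => by
    refine ⟨fun _ => ⟨c, by simp, ?_⟩, good_one hc fun y hy => h y (List.mem_cons_of_mem _ hy)⟩
    have := h x (by simp)
    omega

theorem retP_transfer (hne1 : w1' ≠ []) (hne2 : w2' ≠ []) (hz1 : ZeroW (w1' ++ [σ]))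
    (hz2 : ZeroW (w2' ++ [σ])) (hret : ∀ q q', RetP S w1' q q' → RetP S w2' q q') {q q' : Q}
    (h : RetP S (w1' ++ [σ]) q q') : RetP S (w2' ++ [σ]) q q' := by
  obtain ⟨l, hp, hl⟩ := h
  obtain ⟨ys, l2, h1, h2, h3, h4, h5⟩ := sim hne1 hne2 hz1 hz2 hret 1 l.length l le_rfl q
    [[], []] (q', [w1' ++ [σ]]) (by simp) (by simpa using hp) (by simp [top2])
    (good_one (by simp) hl) hl
  have : ys = [[]] := by
    rcases ys with _ | ⟨y, _ | ⟨z, ys⟩⟩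
    · simp at h2
    · simpa using h2
    · simp at h2
  subst this
  exact ⟨l2, by simpa using h3, h5⟩

theorem highP_transfer (hne1 : w1' ≠ []) (hne2 : w2' ≠ []) (hz1 : ZeroW (w1' ++ [σ]))
    (hz2 : ZeroW (w2' ++ [σ])) (hret : ∀ q q', RetP S w1' q q' → RetP S w2' q q') {q q' : Q}
    (h : HighP S w1' (w1' ++ [σ]) q q') : HighP S w2' (w2' ++ [σ]) q q' := by
  obtain ⟨l, hp, hl⟩ := h
  obtain ⟨ys, l2, h1, h2, h3, h4, h5⟩ := sim hne1 hne2 hz1 hz2 hret 0 l.length l le_rfl q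
    [[]] (q', [w1' ++ [σ]]) (by simp) (by simpa using hp) (by simp [top2])
    hl (fun x hx => List.length_pos_iff.2 ((hp.ne_nil (by simp)).2 x hx))
  have : ys = [[]] := by
    rcases ys with _ | ⟨y, _ | ⟨z, ys⟩⟩
    · simp at h2
    · simpa using h2
    · simp at h2
  subst this
  exact ⟨l2, by simpa using h3, by simpa using h4⟩

theorem oneP_transfer (hne1 : w1' ≠ []) (hne2 : w2' ≠ []) (hz1 : ZeroW (w1' ++ [σ]))
    (hz2 : ZeroW (w2' ++ [σ])) (hret : ∀ q q', RetP S w1' q q' → RetP S w2' q q') {q q' : Q}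
    (h : OneP S w1' (w1' ++ [σ]) q q') : OneP S w2' (w2' ++ [σ]) q q' := by
  obtain ⟨l, s', hp, hl⟩ := h
  obtain ⟨ys, l2, h1, h2, h3, h4, h5⟩ := sim hne1 hne2 hz1 hz2 hret 0 l.length l le_rfl q
    [[]] (q', s' ++ [w1' ++ [σ]]) (by simp) (by simpa using hp) (by simp [top2])
    hl (fun x hx => List.length_pos_iff.2 ((hp.ne_nil (by simp)).2 x hx))
  rcases List.eq_nil_or_concat ys with rfl | ⟨ys, u, rfl⟩
  · exact absurd rfl h1
  simp only [List.concat_eq_append, List.map_append, List.map_singleton] at h2 h3 h4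
  have h6 := (List.append_inj' h2 rfl).2
  have : u = [] := by simpa using h6
  subst this
  exact ⟨l2, ys.map (w2' ++ [σ] ++ ·), by simpa using h3, by simpa using h4⟩

theorem down_transfer (hne1 : w1' ≠ []) (hne2 : w2' ≠ []) (hz1 : ZeroW (w1' ++ [σ])) {q q' : Q}
    (h : Step S (q, [w1' ++ [σ]]) (q', [w1'])) : Step S (q, [w2' ++ [σ]]) (q', [w2']) := by
  obtain ⟨γ, op, τ, hτ, hΔ, hop⟩ := h
  refine ⟨γ, op, τ, ?_, hΔ, ?_⟩
  · rw [← hτ]; simp [symS, top1]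
  · have := ext_step S.bot op (σ := σ) (xs := [[]]) (t := [w1']) hne1 hne2 hz1 (by simp)
      (by simpa using hop)
    rcases this with ⟨ys, hys, h1, h2⟩ | ⟨xs0, h0, h1, h2⟩
    · exfalso
      rcases ys with _ | ⟨y, ys⟩
      · simp at h1
      · simp only [List.map_cons, List.cons.injEq] at h1
        have := congrArg List.length h1.1
        simp at this
    · have : xs0 = [] := by
        rcases xs0 with _ | ⟨y, ys⟩
        · rfl
        · simp at h0
      subst this
      simpa using h2

theorem up_transfer (hsym : symW w1' = symW w2') {q q' : Q}
    (h : Step S (q, [w1']) (q', [w1' ++ [σ]])) : Step S (q, [w2']) (q', [w2' ++ [σ]]) := by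
  obtain ⟨γ, op, τ, hτ, hΔ, hop⟩ := h
  refine ⟨γ, op, τ, ?_, hΔ, ?_⟩
  · rw [← hτ]
    have e : ∀ w : Word A, symS [w] = symW w := fun w => by simp [symS, top1, symW]
    simp only [e, hsym]
  · have e1 : [w1'] = [] ++ [w1'] := rfl
    have e2 : [w2'] = [] ++ [w2'] := rfl
    simp only at hop ⊢
    rw [e1] at hop
    rw [e2]
    cases op with
    | clone2 =>
      simp only [applyOp, clone2_snoc, Option.some.injEq] at hop
      simp at hop
    | push1 a =>
      simp only [applyOp, push1_snoc, ite_some] at hop ⊢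
      simp at hop
      exact ⟨hop.1, by simp [hop.2]⟩
    | push2 a =>
      simp only [applyOp, push2_snoc, ite_some] at hop ⊢
      simp at hop
      exact ⟨hop.1, by simp [hop.2]⟩
    | pop2 => simp only [applyOp, pop2_snoc, ite_some] at hop; exact absurd trivial hop.1
    | pop1 =>
      exfalso
      simp only [applyOp, pop1_snoc, Option.ite_none_right_eq_some, Option.some.injEq] at hop
      have := hop.2
      simp only [List.nil_append, List.cons.injEq, and_true] at this
      have := congrArg List.length this
      simp at this
    | collapse =>
      exfalso
      rcases List.eq_nil_or_concat w1' with h0 | ⟨u, x, h0⟩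
      · rw [h0] at hop
        simp only [applyOp, collapse_nil] at hop
        cases hop
      · rw [h0] at hop
        simp only [List.concat_eq_append, applyOp, collapse_snoc] at hop
        rcases x with x | ⟨x, k⟩
        · simp at hop
        · simp only [Option.ite_none_right_eq_some, Option.some.injEq] at hop
          obtain ⟨k, rfl⟩ : ∃ i, k = i + 1 := ⟨k - 1, by omega⟩
          simp at hop

theorem lowP_transfer (hne1 : w1' ≠ []) (hne2 : w2' ≠ []) (hz1 : ZeroW (w1' ++ [σ]))
    (hsym : symW w1' = symW w2')
    (hloop : ∀ q q', LoopP S w1' q q' → LoopP S w2' q q') {q q' : Q}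
    (h : LowP S w1' σ q q') : LowP S w2' σ q q' := by
  obtain ⟨h1, q1, q2, h2, h3, h4⟩ := h
  exact ⟨h1, q1, q2, down_transfer hne1 hne2 hz1 h2, hloop _ _ h3, up_transfer hsym h4⟩

theorem LoopP.trans {w : Word A} {q q1 q2 : Q} (h : LoopP S w q q1) (h' : LoopP S w q1 q2) :
    LoopP S w q q2 := by
  obtain ⟨l, h1, h2⟩ := h
  obtain ⟨l', h1', h2'⟩ := h'
  refine ⟨l ++ l', h1.append h1', ?_⟩
  intro x hx
  rw [List.mem_append] at hx
  exact hx.elim (h2 x) (h2' x)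

theorem LowP.loop (hne : w1' ≠ []) {q q' : Q} (h : LowP S w1' σ q q') :
    LoopP S (w1' ++ [σ]) q q' := by
  obtain ⟨l, q1, q2, h1, -, h3⟩ := h.path hne
  exact ⟨_, h1, h3⟩

theorem high_of_above {l : List (Q × Stack2 A)} {q q' : Q}
    (hp : Path S (q, [w1' ++ [σ]]) l (q', [w1' ++ [σ]]))
    (h : ∀ x ∈ l, ∃ u r, x.2 = u :: r ∧ w1' ++ [σ] <+: u) : HighP S w1' (w1' ++ [σ]) q q' := by
  refine ⟨l, hp, good_of_ne ?_⟩
  intro x hx h0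
  obtain ⟨u, r, h1, h2⟩ := h x hx
  rw [h0] at h1
  simp at h1
  rw [← h1.1] at h2
  have := h2.length_le
  simp at this

theorem loopP_transfer (hne1 : w1' ≠ []) (hne2 : w2' ≠ []) (hz1 : ZeroW (w1' ++ [σ]))
    (hz2 : ZeroW (w2' ++ [σ])) (hret : ∀ q q', RetP S w1' q q' → RetP S w2' q q')
    (hsym : symW w1' = symW w2')
    (hloop : ∀ q q', LoopP S w1' q q' → LoopP S w2' q q') : ∀ n l, l.length ≤ n → ∀ q q',
    Path S (q, [w1' ++ [σ]]) l (q', [w1' ++ [σ]]) → (∀ x ∈ l, CW (w1' ++ [σ]) x.2) →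
    LoopP S (w2' ++ [σ]) q q' := by
  intro n
  induction n with
  | zero =>
    intro l hl q q' hp _
    have : l = [] := List.length_eq_zero_iff.1 (by omega)
    subst this
    have := hp.eq_of_nil
    simp at this
    subst this
    exact ⟨[], Path.nil _, by simp⟩
  | succ n ih =>
    intro l hl q q' hp hcw
    rcases visit_below w1' σ hp _ _ rfl List.prefix_rfl with h | ⟨l1, l2, e, f, ha, hb, hc, hd, he⟩
    · exact (highP_transfer hne1 hne2 hz1 hz2 hret
        (high_of_above hp fun x hx => h x (by simp [hx]))).loop hne2
    · have hH := (highP_transfer hne1 hne2 hz1 hz2 hret (high_of_above hb hc)).loop hne2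
      obtain ⟨l3, l4, g, k, ha', hb', hc', hd'⟩ := visit_above w1' σ he rfl w1' [] rfl (by
        intro h0; have := h0.length_le; simp at this)
      have hmem : ∀ x ∈ l3 ++ [(g, [w1'])], CW (w1' ++ [σ]) x.2 := by
        intro x hx
        apply hcw x
        rw [ha, ha']
        simp at hx ⊢
        tauto
      have hσ : lvlOf σ = 1 :=
        ((cw_iff w1' σ hne1 _).1 (hmem (g, [w1']) (by simp))).1 ⟨0, rfl⟩
      have hlow : LowP S w1' σ e k := ⟨hσ, f, g, hd, ⟨l3, hb', fun x hx =>
        ((cw_iff w1' σ hne1 _).1 (hmem x (by simp [hx]))).2⟩, hc'⟩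
      have hL := (lowP_transfer hne1 hne2 hz1 hsym hloop hlow).loop hne2
      have hlen := congrArg List.length ha
      have hlen' := congrArg List.length ha'
      simp only [List.length_append, List.length_cons] at hlen hlen'
      have hR := ih l4 (by omega) k q' hd' (fun x hx => hcw x (by rw [ha, ha']; simp [hx]))
      exact (hH.trans hL).trans hR

end Transfer

/-! ## Determinacy -/

theorem run_nonempty {S : CPS Q A Γ} (ρ : Run S) : Nonempty Γ := ⟨ρ.lab 0⟩

/-- The tuple of outputs. -/
def Outp (S : CPS Q A Γ) (w : Word A) :
    Set (Q × Q) × Set (Q × Q) × Set (Q × Q) × Set (Q × Q) × Set (Q × Q) × Option A × Option ℕ :=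
  (ExRet S w, ExLoop S w, ExHLoop S w, ExLLoop S w, ExOneLoop S w, symW w, lvlW w)

theorem determinacy_le [Nonempty Γ] (S : CPS Q A Γ) {w1' w2' : Word A} {σ : Letter A}
    (hne1 : w1' ≠ []) (hne2 : w2' ≠ []) (hz1 : ZeroW (w1' ++ [σ])) (hz2 : ZeroW (w2' ++ [σ]))
    (hr : ExRet S w1' = ExRet S w2') (hl : ExLoop S w1' = ExLoop S w2')
    (hsym : symW w1' = symW w2') :
    ExRet S (w1' ++ [σ]) ⊆ ExRet S (w2' ++ [σ]) ∧
    ExLoop S (w1' ++ [σ]) ⊆ ExLoop S (w2' ++ [σ]) ∧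
    ExHLoop S (w1' ++ [σ]) ⊆ ExHLoop S (w2' ++ [σ]) ∧
    ExLLoop S (w1' ++ [σ]) ⊆ ExLLoop S (w2' ++ [σ]) ∧
    ExOneLoop S (w1' ++ [σ]) ⊆ ExOneLoop S (w2' ++ [σ]) := by
  have hz1' : ZeroW w1' := fun a k hk => hz1 a k (by simp [hk])
  have hz2' : ZeroW w2' := fun a k hk => hz2 a k (by simp [hk])
  have hret : ∀ q q', RetP S w1' q q' → RetP S w2' q q' := by
    intro q q' h
    rw [← mem_exRet S w2' hz2' hne2, ← hr, mem_exRet S w1' hz1' hne1]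
    exact h
  have hloop : ∀ q q', LoopP S w1' q q' → LoopP S w2' q q' := by
    intro q q' h
    rw [← mem_exLoop S w2' hz2', ← hl, mem_exLoop S w1' hz1']
    exact h
  refine ⟨?_, ?_, ?_, ?_, ?_⟩
  · rintro ⟨q, q'⟩ h
    rw [mem_exRet S _ hz1 (by simp)] at h
    rw [mem_exRet S _ hz2 (by simp)]
    exact retP_transfer hne1 hne2 hz1 hz2 hret h
  · rintro ⟨q, q'⟩ h
    rw [mem_exLoop S _ hz1] at h
    rw [mem_exLoop S _ hz2]
    obtain ⟨l, hp, hc⟩ := h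
    exact loopP_transfer hne1 hne2 hz1 hz2 hret hsym hloop _ l le_rfl q q' hp hc
  · rintro ⟨q, q'⟩ h
    rw [mem_exHLoop S _ _ hz1 hne1] at h
    rw [mem_exHLoop S _ _ hz2 hne2]
    exact highP_transfer hne1 hne2 hz1 hz2 hret h
  · rintro ⟨q, q'⟩ h
    rw [mem_exLLoop S _ _ hz1 hne1] at h
    rw [mem_exLLoop S _ _ hz2 hne2]
    exact lowP_transfer hne1 hne2 hz1 hsym hloop h
  · rintro ⟨q, q'⟩ h
    rw [mem_exOneLoop S _ _ hz1 hne1] at h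
    rw [mem_exOneLoop S _ _ hz2 hne2]
    exact oneP_transfer hne1 hne2 hz1 hz2 hret h

theorem determinacy (S : CPS Q A Γ) {w1' w2' : Word A} {σ : Letter A}
    (hne1 : w1' ≠ []) (hne2 : w2' ≠ []) (hz1 : ZeroW (w1' ++ [σ])) (hz2 : ZeroW (w2' ++ [σ]))
    (hr : ExRet S w1' = ExRet S w2') (hl : ExLoop S w1' = ExLoop S w2')
    (hsym : symW w1' = symW w2') : Outp S (w1' ++ [σ]) = Outp S (w2' ++ [σ]) := by
  have e1 : symW (w1' ++ [σ]) = symW (w2' ++ [σ]) := by simp [symW]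
  have e2 : lvlW (w1' ++ [σ]) = lvlW (w2' ++ [σ]) := by simp [lvlW]
  rcases isEmpty_or_nonempty Γ with hΓ | hΓ
  · have hR : ∀ ρ : Run S, False := fun ρ => (run_nonempty ρ).elim hΓ.false
    have a1 : ∀ w, ExRet S w = ∅ := fun w =>
      Set.eq_empty_of_forall_notMem fun p ⟨ρ, _⟩ => hR ρ
    have a2 : ∀ w, ExLoop S w = ∅ := fun w =>
      Set.eq_empty_of_forall_notMem fun p ⟨ρ, _⟩ => hR ρ
    have a3 : ∀ w, ExHLoop S w = ∅ := fun w =>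
      Set.eq_empty_of_forall_notMem fun p ⟨ρ, _⟩ => hR ρ
    have a4 : ∀ w, ExLLoop S w = ∅ := fun w =>
      Set.eq_empty_of_forall_notMem fun p ⟨ρ, _⟩ => hR ρ
    have a5 : ∀ w, ExOneLoop S w = ∅ := fun w =>
      Set.eq_empty_of_forall_notMem fun p ⟨ρ, _⟩ => hR ρ
    simp only [Outp, a1, a2, a3, a4, a5, e1, e2]
  · obtain ⟨b1, b2, b3, b4, b5⟩ := determinacy_le S hne1 hne2 hz1 hz2 hr hl hsym
    obtain ⟨c1, c2, c3, c4, c5⟩ := determinacy_le S hne2 hne1 hz2 hz1 hr.symm hl.symm hsym.symm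
    simp only [Outp, b1.antisymm c1, b2.antisymm c2, b3.antisymm c3, b4.antisymm c4,
      b5.antisymm c5, e1, e2]

/-! ## Words of stacks -/

/-- Words starting with `⊥` that contain no other occurrence of `⊥`. -/
def BotW (b : A) (w : Word A) : Prop :=
  ∃ x, w = Sum.inl b :: x ∧ ∀ a ∈ x, symOf a ≠ b

theorem BotW.snoc {b : A} {w : Word A} (h : BotW b w) {a : Letter A} (ha : symOf a ≠ b) :
    BotW b (w ++ [a]) := by
  obtain ⟨x, rfl, hx⟩ := h
  refine ⟨x ++ [a], rfl, ?_⟩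
  intro c hc
  rw [List.mem_append, List.mem_singleton] at hc
  rcases hc with hc | rfl
  · exact hx c hc
  · exact ha

theorem BotW.of_snoc {b : A} {w : Word A} {a : Letter A} (h : BotW b (w ++ [a])) (hw : w ≠ []) :
    BotW b w ∧ symOf a ≠ b := by
  obtain ⟨x, hx, h⟩ := h
  rcases w with _ | ⟨y, w⟩
  · exact absurd rfl hw
  simp only [List.cons_append, List.cons.injEq] at hx
  obtain ⟨rfl, rfl⟩ := hx
  exact ⟨⟨w, rfl, fun c hc => h c (by simp [hc])⟩, h a (by simp)⟩

theorem BotW.dropLast {b : A} {w : Word A} (h : BotW b w) (hl : 1 < w.length) :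
    BotW b w.dropLast := by
  rcases List.eq_nil_or_concat w with rfl | ⟨w, a, rfl⟩
  · simp at hl
  · simp only [List.concat_eq_append, List.dropLast_concat] at *
    refine (h.of_snoc ?_).1
    rintro rfl
    simp at hl

theorem IsStack.botW {b : A} {s : Stack2 A} (h : IsStack b s) : ∀ w ∈ s, BotW b w := by
  induction h with
  | base => intro w hw; simp [bottom2] at hw; subst hw; exact ⟨[], rfl, by simp⟩
  | @step s t op hs hop ih =>
    rcases List.eq_nil_or_concat s with rfl | ⟨s, u, rfl⟩
    · cases op <;> simp [applyOp, clone2, top2, pop1, pop2, collapse, top1, push1, push2] at hop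
    simp only [List.concat_eq_append] at *
    have hs' : ∀ w ∈ s, BotW b w := fun w hw => ih w (by simp [hw])
    have hu : BotW b u := ih u (by simp)
    have key : ∀ v, BotW b v → ∀ w ∈ s ++ [v], BotW b w := by
      intro v hv w hw
      rw [List.mem_append, List.mem_singleton] at hw
      rcases hw with hw | rfl
      · exact hs' w hw
      · exact hv
    cases op with
    | clone2 =>
      simp only [applyOp, clone2_snoc, Option.some.injEq] at hop
      intro w hw
      rw [← hop, List.mem_append, List.mem_singleton] at hw
      rcases hw with hw | rfl
      · exact ih w hw
      · exact hu
    | push1 a =>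
      simp only [applyOp, push1_snoc, ite_some] at hop
      rw [← hop.2]; exact key _ (hu.snoc hop.1)
    | push2 a =>
      simp only [applyOp, push2_snoc, ite_some] at hop
      rw [← hop.2]; exact key _ (hu.snoc hop.1)
    | pop2 =>
      simp only [applyOp, pop2_snoc, ite_some] at hop
      rw [← hop.2]; exact hs'
    | pop1 =>
      simp only [applyOp, pop1_snoc, Option.ite_none_right_eq_some, Option.some.injEq] at hop
      rw [← hop.2]; exact key _ (hu.dropLast hop.1)
    | collapse =>
      rcases List.eq_nil_or_concat u with rfl | ⟨u, x, rfl⟩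
      · simp only [applyOp, collapse_nil] at hop
        cases hop
      simp only [List.concat_eq_append] at *
      simp only [applyOp, collapse_snoc] at hop
      rcases x with x | ⟨x, k⟩
      · simp only [ite_some] at hop
        rw [← hop.2]; exact key _ (hu.of_snoc hop.1).1
      · simp only [Option.ite_none_right_eq_some, Option.some.injEq] at hop
        rw [← hop.2]
        intro w hw
        exact ih w (List.mem_of_mem_take hw)

theorem symOf_down (a : Letter A) : symOf (match a with
    | Sum.inl x => Sum.inl x
    | Sum.inr (x, _) => Sum.inr (x, 0)) = symOf a := by
  rcases a with a | ⟨a, k⟩ <;> rfl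

theorem down0_isZero (w : Word A) : ZeroW (down0 w) := by
  intro a k h
  simp only [down0, List.mem_map] at h
  obtain ⟨x, -, hx⟩ := h
  rcases x with x | ⟨x, j⟩
  · simp at hx
  · simp at hx; exact hx.2.symm

theorem down0_botW {b : A} {w : Word A} (h : BotW b w) : BotW b (down0 w) := by
  obtain ⟨x, rfl, hx⟩ := h
  refine ⟨down0 x, rfl, ?_⟩
  intro a ha
  simp only [down0, List.mem_map] at ha
  obtain ⟨y, hy, rfl⟩ := ha
  rw [symOf_down]
  exact hx y hy

theorem outp_down0 (S : CPS Q A Γ) (w : Word A) : Outp S (down0 w) = Outp S w := by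
  have hd : down0 (down0 w) = down0 w := down0_zero _ (down0_isZero w)
  have e1 : symW (down0 w) = symW w := by
    simp only [symW, down0, List.getLast?_map, Option.map_map]
    congr 1
    funext a
    exact symOf_down a
  have e2 : lvlW (down0 w) = lvlW w := by
    simp only [lvlW, down0, List.getLast?_map, Option.map_map]
    congr 1
    funext a
    rcases a with a | ⟨a, k⟩ <;> rfl
  simp only [Outp, e1, e2, ExRet, ExLoop, ExHLoop, ExLLoop, ExOneLoop, hd]

/-! ## The automaton -/

def Valid (b : A) (w : Word A) : Prop := BotW b w ∧ ZeroW w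

abbrev MSt (Q A : Type) := Set (Q × Q) × Set (Q × Q) × A × A × Bool

/-- The state reached after reading a valid word. -/
noncomputable def stOf (S : CPS Q A Γ) (w : Word A) : MSt Q A :=
  if w.length ≤ 1 then (∅, ∅, S.bot, S.bot, false)
  else (ExRet S w.dropLast, ExLoop S w.dropLast, (symW w.dropLast).getD S.bot,
    (symW w).getD S.bot, decide (lvlW w = some 2))

theorem valid_cases {b : A} {w : Word A} (h : Valid b w) :
    w = [Sum.inl b] ∨ ∃ w' a, w = w' ++ [a] ∧ Valid b w' ∧ w' ≠ [] ∧ symOf a ≠ b := by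
  obtain ⟨h1, h2⟩ := h
  rcases List.eq_nil_or_concat w with rfl | ⟨w', a, rfl⟩
  · obtain ⟨x, hx, -⟩ := h1; simp at hx
  · simp only [List.concat_eq_append] at *
    rcases eq_or_ne w' [] with rfl | hne
    · left
      obtain ⟨x, hx, -⟩ := h1
      simp at hx
      simp [hx.1]
    · right
      exact ⟨w', a, rfl, ⟨(h1.of_snoc hne).1, fun c k hk => h2 c k (by simp [hk])⟩, hne,
        (h1.of_snoc hne).2⟩

theorem stOf_snoc (S : CPS Q A Γ) (w : Word A) (a : Letter A) (hw : w ≠ []) :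
    stOf S (w ++ [a]) = (ExRet S w, ExLoop S w, (symW w).getD S.bot, symOf a,
      decide (lvlOf a = 2)) := by
  have hp := List.length_pos_iff.2 hw
  rw [stOf, if_neg (by simp; omega)]
  simp [symW, lvlW]

theorem letter_ext {a c : Letter A} (hs : symOf a = symOf c)
    (hl : decide (lvlOf a = 2) = decide (lvlOf c = 2)) (ha : ZeroW [a]) (hc : ZeroW [c]) :
    a = c := by
  rcases a with a | ⟨a, k⟩ <;> rcases c with c | ⟨c, j⟩
  · simp [symOf] at hs; rw [hs]
  · simp [lvlOf] at hl
  · simp [lvlOf] at hl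
  · have h1 := ha a k (by simp)
    have h2 := hc c j (by simp)
    simp [symOf] at hs
    rw [h1, h2, hs]

theorem symW_some {w : Word A} (hw : w ≠ []) : ∃ a, symW w = some a := by
  rcases List.eq_nil_or_concat w with rfl | ⟨w', a, rfl⟩
  · exact absurd rfl hw
  · exact ⟨symOf a, by simp [symW]⟩

theorem stOf_outp (S : CPS Q A Γ) {w1 w2 : Word A} (h1 : Valid S.bot w1) (h2 : Valid S.bot w2)
    (h : stOf S w1 = stOf S w2) : Outp S w1 = Outp S w2 := by
  have hb : stOf S [Sum.inl S.bot] = (∅, ∅, S.bot, S.bot, false) := by simp [stOf]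
  have hz1 := h1.2
  have hz2 := h2.2
  rcases valid_cases h1 with rfl | ⟨v1, a1, rfl, hv1, hn1, ha1⟩ <;>
    rcases valid_cases h2 with rfl | ⟨v2, a2, rfl, hv2, hn2, ha2⟩
  · rfl
  · rw [hb, stOf_snoc S _ _ hn2] at h
    simp only [Prod.mk.injEq] at h
    exact absurd h.2.2.2.1.symm ha2
  · rw [hb, stOf_snoc S _ _ hn1] at h
    simp only [Prod.mk.injEq] at h
    exact absurd h.2.2.2.1 ha1
  · rw [stOf_snoc S _ _ hn1, stOf_snoc S _ _ hn2] at h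
    simp only [Prod.mk.injEq] at h
    obtain ⟨e1, e2, e3, e4, e5⟩ := h
    have : a1 = a2 := letter_ext e4 e5 (fun c k hk => hz1 c k (by simp at hk; simp [hk]))
      (fun c k hk => hz2 c k (by simp at hk; simp [hk]))
    subst this
    refine determinacy S hn1 hn2 hz1 hz2 e1 e2 ?_
    obtain ⟨x, hx⟩ := symW_some hn1
    obtain ⟨y, hy⟩ := symW_some hn2
    rw [hx, hy] at e3 ⊢
    simpa using e3

theorem stOf_step (S : CPS Q A Γ) {w1 w2 : Word A} (h1 : Valid S.bot w1) (h2 : Valid S.bot w2)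
    (h : stOf S w1 = stOf S w2) (a : Letter A) : stOf S (w1 ++ [a]) = stOf S (w2 ++ [a]) := by
  have hn : ∀ w, Valid S.bot w → w ≠ [] := by
    rintro w ⟨⟨x, rfl, -⟩, -⟩; simp
  have ho := stOf_outp S h1 h2 h
  simp only [Outp, Prod.mk.injEq] at ho
  rw [stOf_snoc S _ _ (hn _ h1), stOf_snoc S _ _ (hn _ h2), ho.1, ho.2.1, ho.2.2.2.2.2.1]

open Classical in
/-- The transition function. -/
noncomputable def mStep (S : CPS Q A Γ) (s : MSt Q A) (a : Letter A) : MSt Q A :=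
  if symOf a = S.bot then stOf S [Sum.inl S.bot]
  else if h : ∃ w, Valid S.bot w ∧ stOf S w = s then stOf S (h.choose ++ [a]) else s

open Classical in
/-- The output function. -/
noncomputable def mOut (S : CPS Q A Γ) (s : MSt Q A) :
    Set (Q × Q) × Set (Q × Q) × Set (Q × Q) × Set (Q × Q) × Set (Q × Q) × Option A × Option ℕ :=
  if h : ∃ w, Valid S.bot w ∧ stOf S w = s then Outp S h.choose
  else (∅, ∅, ∅, ∅, ∅, none, none)

theorem mOut_stOf (S : CPS Q A Γ) {w : Word A} (h : Valid S.bot w) :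
    mOut S (stOf S w) = Outp S w := by
  have hex : ∃ v, Valid S.bot v ∧ stOf S v = stOf S w := ⟨w, h, rfl⟩
  rw [mOut, dif_pos hex]
  exact stOf_outp S hex.choose_spec.1 h hex.choose_spec.2

theorem foldl_stOf (S : CPS Q A Γ) (w : Word A) : Valid S.bot w →
    w.foldl (mStep S) (stOf S [Sum.inl S.bot]) = stOf S w := by
  induction w using List.reverseRecOn with
  | nil => rintro ⟨⟨x, hx, -⟩, -⟩; simp at hx
  | append_singleton w a ih =>
    intro h
    rcases valid_cases h with h0 | ⟨w', a', h0, hv, hn, ha⟩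
    · rw [h0]; simp [mStep, symOf]
    · have hw := (List.append_inj' h0 rfl).1
      have haa : a = a' := by simpa using (List.append_inj' h0 rfl).2
      subst hw haa
      rw [List.foldl_append, ih hv, List.foldl_cons, List.foldl_nil]
      have hex : ∃ v, Valid S.bot v ∧ stOf S v = stOf S w := ⟨w, hv, rfl⟩
      rw [mStep, if_neg ha, dif_pos hex]
      exact stOf_step S hex.choose_spec.1 hv hex.choose_spec.2 a

theorem card_MSt [Fintype Q] [Fintype A] : Nat.card (MSt Q A) =
    2 ^ (Fintype.card Q * Fintype.card Q) * 2 ^ (Fintype.card Q * Fintype.card Q) *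
      Fintype.card A ^ 2 * 2 := by
  simp only [MSt, Nat.card_eq_fintype_card, Fintype.card_set, Fintype.card_prod,
    Fintype.card_bool]
  ring

end Aux

/-- There is a deterministic finite automaton with output with at
most `2^(|Q|²)·2^(|Q|²)·|Σ|²·2` states computing `ExRet(w)`, `ExLoop(w)`,
`ExHLoop(w)`, `ExLLoop(w)`, `ExOneLoop(w)`, `Sym(w)` and `Lvl(w)` on input `w↓₀`
for every word `w` occurring as the topmost word of some stack. -/
theorem loops_computable_by_moore
    {Q A Γ : Type} [Fintype Q] [Fintype A] [DecidableEq A] (S : CPS Q A Γ) :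
    ∃ M : Moore (Letter A)
        (Set (Q × Q) × Set (Q × Q) × Set (Q × Q) × Set (Q × Q) × Set (Q × Q) ×
          Option A × Option ℕ),
      Nat.card M.St ≤ 2 ^ (Fintype.card Q * Fintype.card Q) *
          2 ^ (Fintype.card Q * Fintype.card Q) * Fintype.card A ^ 2 * 2 ∧
      ∀ (s : Stack2 A) (w : Word A), IsStack S.bot s → top2 s = some w →
        M.output (down0 w) =
          (ExRet S w, ExLoop S w, ExHLoop S w, ExLLoop S w, ExOneLoop S w,
            symW w, lvlW w) := by
  refine ⟨⟨MSt Q A, inferInstance, stOf S [Sum.inl S.bot], mStep S, mOut S⟩, card_MSt.le, ?_⟩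
  intro s w hs hw
  have hb : BotW S.bot w := hs.botW w (List.mem_of_getLast? hw)
  have hv : Valid S.bot (down0 w) := ⟨down0_botW hb, down0_isZero w⟩
  show mOut S ((down0 w).foldl (mStep S) (stOf S [Sum.inl S.bot])) = Outp S w
  rw [foldl_stOf S _ hv, mOut_stOf S hv, outp_down0]

end CPG
end

section
/- For each level-2 stack s ∈ Stacks(Σ), the map d ↦ LeftStack(d,s) is an order isomorphism from (dom(Enc(s)), ≤_lex) onto (Milestones(s), ≪). -/
namespace CPG

variable {Q A Γ : Type} [DecidableEq A]

/-! ## Auxiliary material for the proof -/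

section Aux
set_option linter.unusedSectionVars false
variable {B : Type} [DecidableEq B]

/-- Milestones of a 2-word, relative to the preceding word `p`. -/
def mil (p : Word B) : Stack2 B → Stack2 B → Prop
  | [], _ => False
  | w :: rest, m => (∃ v, m = [v] ∧ lcp p w <+: v ∧ v <+: w) ∨
      ∃ m', m = w :: m' ∧ mil w rest m'

theorem mil_ne_nil {p : Word B} {l m : Stack2 B} (h : mil p l m) : m ≠ [] := by
  cases l with
  | nil => exact h.elim
  | cons w rest =>
    rcases h with ⟨v, rfl, -⟩ | ⟨m', rfl, -⟩ <;> simp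

theorem mil_length {p : Word B} {l m : Stack2 B} (h : mil p l m) : m.length ≤ l.length := by
  induction l generalizing p m with
  | nil => exact h.elim
  | cons w rest ih =>
    rcases h with ⟨v, rfl, -⟩ | ⟨m', rfl, h⟩
    · simp
    · have := ih h
      simpa using this

theorem lcp_cons_cons (a : Letter B) (p w : Word B) : lcp (a :: p) (a :: w) = a :: lcp p w := by
  simp [lcp]

theorem mil_map_cons (a : Letter B) (p : Word B) (l m : Stack2 B) :
    mil (a :: p) (l.map (List.cons a)) m ↔ ∃ m', m = m'.map (List.cons a) ∧ mil p l m' := by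
  induction l generalizing p m with
  | nil => simp [mil]
  | cons w rest ih =>
    simp only [List.map_cons, mil, lcp_cons_cons]
    constructor
    · rintro (⟨v, rfl, h1, h2⟩ | ⟨m', rfl, h⟩)
      · obtain ⟨x, rfl⟩ := h1
        refine ⟨[lcp p w ++ x], by simp, Or.inl ⟨_, rfl, by simp, ?_⟩⟩
        simpa using h2
      · obtain ⟨m'', rfl, h'⟩ := (ih _ _).1 h
        exact ⟨w :: m'', by simp, Or.inr ⟨_, rfl, h'⟩⟩
    · rintro ⟨m', rfl, (⟨v, rfl, h1, h2⟩ | ⟨m'', rfl, h⟩)⟩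
      · exact Or.inl ⟨a :: v, by simp, by simpa using h1, by simpa using h2⟩
      · exact Or.inr ⟨m''.map (List.cons a), by simp, (ih _ _).2 ⟨_, rfl, h⟩⟩

theorem mil_append (p : Word B) (l r m : Stack2 B) :
    mil p (l ++ r) m ↔ mil p l m ∨ ∃ m', m = l ++ m' ∧ mil (l.getLastD p) r m' := by
  induction l generalizing p m with
  | nil => simp [mil]
  | cons w rest ih =>
    have e : (w :: rest).getLastD p = rest.getLastD w := by
      cases rest <;> simp [List.getLastD]
    simp only [List.cons_append, mil, e]
    constructor
    · rintro (h | ⟨m', rfl, h⟩)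
      · exact Or.inl (Or.inl h)
      · rcases (ih _ _).1 h with hh | ⟨m'', rfl, hh⟩
        · exact Or.inl (Or.inr ⟨_, rfl, hh⟩)
        · exact Or.inr ⟨m'', rfl, hh⟩
    · rintro ((h | ⟨m', rfl, h⟩) | ⟨m'', rfl, h⟩)
      · exact Or.inl h
      · exact Or.inr ⟨m', rfl, (ih _ _).2 (Or.inl h)⟩
      · exact Or.inr ⟨_, rfl, (ih _ _).2 (Or.inr ⟨_, rfl, h⟩)⟩

/-- All words start with the letter `τ`. -/
def Headed (τ : Letter B) (l : Stack2 B) : Prop := ∀ w ∈ l, ∃ u, w = τ :: u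

theorem mil_headed {τ : Letter B} {p : Word B} {l m : Stack2 B} (hl : Headed τ l)
    (h : mil (τ :: p) l m) : Headed τ m := by
  induction l generalizing p m with
  | nil => exact h.elim
  | cons w rest ih =>
    obtain ⟨u, rfl⟩ := hl w (by simp)
    rcases h with ⟨v, rfl, h1, h2⟩ | ⟨m', rfl, h⟩
    · rw [lcp_cons_cons] at h1
      obtain ⟨x, rfl⟩ := h1
      intro w hw
      simp at hw
      subst hw
      exact ⟨_, rfl⟩
    · have := ih (p := u) (fun w hw => hl w (by simp [hw])) h
      intro w hw
      rcases List.mem_cons.1 hw with rfl | hw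
      · exact ⟨_, rfl⟩
      · exact this w hw

/-- the first word of `R` does not continue the block `τ τ'`. -/
def NoCont (τ τ' : Letter B) (R : Stack2 B) : Prop := ∀ u R', R ≠ (τ :: τ' :: u) :: R'

theorem mil_noCont {τ τ' : Letter B} {p : Word B} {R m : Stack2 B} (hR : NoCont τ τ' R)
    (h : mil p R m) : NoCont τ τ' m := by
  cases R with
  | nil => exact h.elim
  | cons w rest =>
    rintro u R' rfl
    rcases h with ⟨v, h0, h1, h2⟩ | ⟨m', h0, h⟩
    · simp at h0
      obtain ⟨rfl, rfl⟩ := h0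
      obtain ⟨x, rfl⟩ := h2
      exact hR _ _ rfl
    · simp at h0
      exact hR u rest (by rw [h0.1])

/-- Structural description of nonempty blocklines. -/
inductive Good_s19 : Letter B → Stack2 B → Prop where
  | one (τ : Letter B) : Good_s19 τ [[τ]]
  | cons {τ : Letter B} {R : Stack2 B} : Good_s19 τ R → Good_s19 τ ([τ] :: R)
  | blk {τ τ' : Letter B} {L : Stack2 B} : Good_s19 τ' L → Good_s19 τ (L.map (List.cons τ))
  | app {τ τ' : Letter B} {L R : Stack2 B} : Good_s19 τ' L → Good_s19 τ R → NoCont τ τ' R →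
      Good_s19 τ (L.map (List.cons τ) ++ R)

theorem Good_s19.headed {τ : Letter B} {l : Stack2 B} (h : Good_s19 τ l) : Headed τ l := by
  induction h with
  | one => intro w hw; simp at hw; exact ⟨_, hw⟩
  | cons _ ih =>
    intro w hw
    rcases List.mem_cons.1 hw with rfl | hw
    · exact ⟨_, rfl⟩
    · exact ih w hw
  | blk => intro w hw; obtain ⟨u, -, rfl⟩ := List.mem_map.1 hw; exact ⟨_, rfl⟩
  | app _ _ _ _ ih =>
    intro w hw
    rcases List.mem_append.1 hw with hw | hw
    · obtain ⟨u, -, rfl⟩ := List.mem_map.1 hw; exact ⟨_, rfl⟩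
    · exact ih w hw

theorem Good_s19.ne_nil {τ : Letter B} {l : Stack2 B} (h : Good_s19 τ l) : l ≠ [] := by
  induction h <;> simp_all

theorem size2_append (l r : Stack2 B) : size2 (l ++ r) = size2 l + size2 r := by
  simp [size2]

theorem size2_map (a : Letter B) (l : Stack2 B) :
    size2 (l.map (List.cons a)) = size2 l + l.length := by
  induction l with
  | nil => simp [size2]
  | cons w l ih => simp [size2] at *; omega

theorem split_block (τ τ' : Letter B) (l : Stack2 B) :
    ∃ L R, l = L.map (List.cons τ) ++ R ∧ Headed τ' L ∧ NoCont τ τ' R := by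
  induction l with
  | nil => exact ⟨[], [], by simp, by simp [Headed], by simp [NoCont]⟩
  | cons w rest ih =>
    by_cases hw : ∃ u, w = τ :: τ' :: u
    · obtain ⟨u, rfl⟩ := hw
      obtain ⟨L, R, rfl, h1, h2⟩ := ih
      refine ⟨(τ' :: u) :: L, R, by simp, ?_, h2⟩
      intro w hw
      rcases List.mem_cons.1 hw with rfl | hw
      · exact ⟨_, rfl⟩
      · exact h1 w hw
    · refine ⟨[], w :: rest, by simp, by simp [Headed], ?_⟩
      intro u R' h
      simp at h
      exact hw ⟨u, h.1⟩

theorem good_of_headed (n : ℕ) (τ : Letter B) (l : Stack2 B) (hn : size2 l < n) (hl : l ≠ [])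
    (h : Headed τ l) : Good_s19 τ l := by
  induction n generalizing τ l with
  | zero => omega
  | succ n ih =>
    obtain ⟨w, rest, rfl⟩ := List.exists_cons_of_ne_nil hl
    obtain ⟨u, rfl⟩ := h _ (List.mem_cons_self)
    have hrest : Headed τ rest := fun w hw => h w (by simp [hw])
    cases u with
    | nil =>
      by_cases hr : rest = []
      · subst hr; exact .one τ
      · refine .cons (ih τ rest ?_ hr hrest)
        simp [size2] at *; omega
    | cons τ' u =>
      obtain ⟨L, R, rfl, h1, h2⟩ := split_block τ τ' rest
      have e : (τ :: τ' :: u) :: (L.map (List.cons τ) ++ R) =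
          ((τ' :: u) :: L).map (List.cons τ) ++ R := by simp
      rw [e] at hn ⊢
      rw [size2_append, size2_map] at hn
      simp only [List.length_cons] at hn
      have g1 : Good_s19 τ' ((τ' :: u) :: L) := by
        apply ih _ _ (by omega) (by simp)
        intro w hw
        rcases List.mem_cons.1 hw with rfl | hw
        · exact ⟨_, rfl⟩
        · exact h1 w hw
      by_cases hR : R = []
      · subst hR
        rw [List.append_nil]
        exact .blk g1
      · exact .app g1 (ih _ _ (by omega) hR (fun w hw => hrest w (by simp [hw]))) h2

theorem encBL_one (Q : Type) (n : ℕ) (σ : EncLabel Q B) (τ : Letter B) :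
    encBL Q n σ [[τ]] = .node σ none none := by
  cases n <;> simp [encBL]

theorem encBL_cons (Q : Type) (n : ℕ) (σ : EncLabel Q B) (τ : Letter B) {R : Stack2 B}
    (hR : R ≠ []) :
    encBL Q (n + 1) σ ([τ] :: R) = .node σ none (some (encBL Q n epsLab R)) := by
  obtain ⟨w, rest, rfl⟩ := List.exists_cons_of_ne_nil hR
  simp [encBL]

theorem take_block (τ τ' : Letter B) {L R : Stack2 B} (hL : Headed τ' L) (hR : NoCont τ τ' R) :
    (L.map (List.cons τ) ++ R).takeWhile (fun v => decide (v.take 2 = [τ, τ'])) =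
      L.map (List.cons τ) ∧
    (L.map (List.cons τ) ++ R).dropWhile (fun v => decide (v.take 2 = [τ, τ'])) = R := by
  induction L with
  | nil =>
    cases R with
    | nil => simp
    | cons w R =>
      have : w.take 2 ≠ [τ, τ'] := by
        intro h
        match w, h with
        | a :: b :: u, h =>
          simp at h
          obtain ⟨rfl, rfl⟩ := h
          exact hR u R rfl
      simp [this]
  | cons w L ih =>
    obtain ⟨u, rfl⟩ := hL w (by simp)
    have := ih (fun w hw => hL w (by simp [hw]))
    simpa using this

theorem map_tail_cons (τ : Letter B) (L : Stack2 B) :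
    (L.map (List.cons τ)).map List.tail = L := by
  induction L <;> simp_all

theorem encBL_blk (Q : Type) (n : ℕ) (σ : EncLabel Q B) (τ τ' : Letter B) {L R : Stack2 B}
    (hL : Headed τ' L) (hL0 : L ≠ []) (hR : NoCont τ τ' R) :
    encBL Q (n + 1) σ (L.map (List.cons τ) ++ R) =
      .node σ (some (encBL Q n (symLab τ') L))
        (match R with
          | [] => none
          | _ :: _ => some (encBL Q n epsLab R)) := by
  obtain ⟨h1, h2⟩ := take_block τ τ' hL hR
  obtain ⟨w, L, rfl⟩ := List.exists_cons_of_ne_nil hL0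
  obtain ⟨u, rfl⟩ := hL w (by simp)
  have h3 := map_tail_cons τ ((τ' :: u) :: L)
  simp only [List.map_cons, List.cons_append] at h1 h2 h3 ⊢
  rw [encBL.eq_def]
  have e1 : ¬ (τ :: τ' :: u).length ≤ 1 := by simp
  have e2 : (τ :: τ' :: u).take 2 = [τ, τ'] := by simp
  simp only [if_neg e1, e2, h1, h2, List.map_cons, List.tail_cons]
  simp only [List.map_cons, List.tail_cons] at h3
  rw [h3]
  cases R <;> rfl

theorem encBL_blk_nil (Q : Type) (n : ℕ) (σ : EncLabel Q B) (τ τ' : Letter B) {L : Stack2 B}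
    (hL : Headed τ' L) (hL0 : L ≠ []) :
    encBL Q (n + 1) σ (L.map (List.cons τ)) =
      .node σ (some (encBL Q n (symLab τ') L)) none := by
  have := encBL_blk Q n σ τ τ' hL hL0 (R := []) (by simp [NoCont])
  simpa using this

theorem encBL_blk_app (Q : Type) (n : ℕ) (σ : EncLabel Q B) (τ τ' : Letter B) {L R : Stack2 B}
    (hL : Headed τ' L) (hL0 : L ≠ []) (hR : NoCont τ τ' R) (hR0 : R ≠ []) :
    encBL Q (n + 1) σ (L.map (List.cons τ) ++ R) =
      .node σ (some (encBL Q n (symLab τ') L)) (some (encBL Q n epsLab R)) := by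
  rw [encBL_blk Q n σ τ τ' hL hL0 hR]
  obtain ⟨w, R', rfl⟩ := List.exists_cons_of_ne_nil hR0
  rfl

theorem encBL_fuel (Q : Type) {τ : Letter B} {l : Stack2 B} (h : Good_s19 τ l) (σ : EncLabel Q B)
    (n n' : ℕ) (hn : size2 l < n) (hn' : size2 l < n') : encBL Q n σ l = encBL Q n' σ l := by
  induction h generalizing σ n n' with
  | one => rw [encBL_one, encBL_one]
  | cons hR ih =>
    obtain ⟨n, rfl⟩ := Nat.exists_eq_succ_of_ne_zero (by omega : n ≠ 0)
    obtain ⟨n', rfl⟩ := Nat.exists_eq_succ_of_ne_zero (by omega : n' ≠ 0)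
    simp only [Nat.succ_eq_add_one]
    rw [encBL_cons _ _ _ _ hR.ne_nil, encBL_cons _ _ _ _ hR.ne_nil, ih epsLab n n'] <;>
    · simp [size2] at *; omega
  | blk hL ih =>
    obtain ⟨n, rfl⟩ := Nat.exists_eq_succ_of_ne_zero (by omega : n ≠ 0)
    obtain ⟨n', rfl⟩ := Nat.exists_eq_succ_of_ne_zero (by omega : n' ≠ 0)
    have := List.length_pos_of_ne_nil hL.ne_nil
    rw [size2_map] at hn hn'
    simp only [Nat.succ_eq_add_one]
    rw [encBL_blk_nil _ _ _ _ _ hL.headed hL.ne_nil, encBL_blk_nil _ _ _ _ _ hL.headed hL.ne_nil,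
      ih _ n n' (by omega) (by omega)]
  | app hL hR hc ih1 ih2 =>
    obtain ⟨n, rfl⟩ := Nat.exists_eq_succ_of_ne_zero (by omega : n ≠ 0)
    obtain ⟨n', rfl⟩ := Nat.exists_eq_succ_of_ne_zero (by omega : n' ≠ 0)
    have := List.length_pos_of_ne_nil hL.ne_nil
    rw [size2_append, size2_map] at hn hn'
    simp only [Nat.succ_eq_add_one]
    rw [encBL_blk_app _ _ _ _ _ hL.headed hL.ne_nil hc hR.ne_nil,
      encBL_blk_app _ _ _ _ _ hL.headed hL.ne_nil hc hR.ne_nil,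
      ih1 _ n n' (by omega) (by omega), ih2 _ n n' (by omega) (by omega)]

theorem lexLe_nil_right {b : Bool} {d : List Bool} : ¬ lexLe (b :: d) [] := by
  rintro (h | ⟨c, x, y, h1, h2⟩)
  · simp at h
  · simp at h2

theorem lexLe_cons {a b : Bool} {d e : List Bool} :
    lexLe (a :: d) (b :: e) ↔ (a = b ∧ lexLe d e) ∨ (a = false ∧ b = true) := by
  constructor
  · rintro (h | ⟨c, x, y, h1, h2⟩)
    · rw [List.cons_prefix_cons] at h
      exact Or.inl ⟨h.1, Or.inl h.2⟩
    · cases c with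
      | nil => simp at h1 h2; exact Or.inr ⟨h1.1, h2.1⟩
      | cons c0 c =>
        simp at h1 h2
        exact Or.inl ⟨h1.1.trans h2.1.symm, Or.inr ⟨c, x, y, h1.2, h2.2⟩⟩
  · rintro (⟨rfl, h | ⟨c, x, y, rfl, rfl⟩⟩ | ⟨rfl, rfl⟩)
    · exact Or.inl (by simpa using h)
    · exact Or.inr ⟨a :: c, x, y, by simp, by simp⟩
    · exact Or.inr ⟨[], d, e, by simp, by simp⟩

theorem lexLe_total (d e : List Bool) : lexLe d e ∨ lexLe e d := by
  induction d generalizing e with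
  | nil => exact Or.inl (Or.inl (by simp))
  | cons a d ih =>
    cases e with
    | nil => exact Or.inr (Or.inl (by simp))
    | cons b e =>
      rw [lexLe_cons, lexLe_cons]
      rcases ih e with h | h <;> cases a <;> cases b <;> simp [h]

/-- Comparison by width, then by the length of the topmost word. -/
def mlt (m m' : Stack2 B) : Prop :=
  m.length < m'.length ∨
    (m.length = m'.length ∧ (m.getLastD []).length < (m'.getLastD []).length)

theorem mlt_append (l : Stack2 B) {m m' : Stack2 B} (hm : m ≠ []) (hm' : m' ≠ [])
    (h : mlt m m') : mlt (l ++ m) (l ++ m') := by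
  have e : ∀ k : Stack2 B, k ≠ [] → (l ++ k).getLastD [] = k.getLastD [] := by
    intro k hk
    rw [List.getLastD_eq_getLast?, List.getLastD_eq_getLast?, List.getLast?_append_of_ne_nil _ hk]
  simp only [mlt, e m hm, e m' hm', List.length_append] at *
  omega

theorem getLastD_map (a : Letter B) {m : Stack2 B} (hm : m ≠ []) :
    (m.map (List.cons a)).getLastD [] = a :: m.getLastD [] := by
  obtain ⟨i, x, rfl⟩ := List.eq_nil_or_concat m |>.resolve_left hm
  simp

theorem mlt_map (a : Letter B) {m m' : Stack2 B} (hm : m ≠ []) (hm' : m' ≠ [])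
    (h : mlt m m') : mlt (m.map (List.cons a)) (m'.map (List.cons a)) := by
  simp only [mlt, getLastD_map a hm, getLastD_map a hm', List.length_map, List.length_cons] at *
  omega

theorem mlt_root (τ τ' : Letter B) {m : Stack2 B} (hm : m ≠ []) (h : Headed τ' m) :
    mlt [[τ]] (m.map (List.cons τ)) := by
  have hl := List.length_pos_of_ne_nil hm
  have : m.getLastD [] ≠ [] := by
    obtain ⟨i, x, rfl⟩ := List.eq_nil_or_concat m |>.resolve_left hm
    obtain ⟨u, rfl⟩ := h x (by simp)
    simp
  have := List.length_pos_of_ne_nil this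
  have e : ([[τ]] : Stack2 B).getLastD [] = [τ] := rfl
  simp only [mlt, getLastD_map τ hm, e, List.length_map, List.length_cons, List.length_nil]
  omega

theorem mil_single (τ : Letter B) (R : Stack2 B) (m : Stack2 B) :
    mil [τ] ([τ] :: R) m ↔ m = [[τ]] ∨ ∃ m', m = [τ] :: m' ∧ mil [τ] R m' := by
  have : lcp [τ] [τ] = [τ] := by simp [lcp]
  simp only [mil, this]
  constructor
  · rintro (⟨v, rfl, h1, h2⟩ | h)
    · left
      rw [h2.eq_of_length_le h1.length_le]
    · exact Or.inr h
  · rintro (rfl | h)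
    · exact Or.inl ⟨[τ], rfl, by simp, by simp⟩
    · exact Or.inr h

theorem mil_blk (τ τ' : Letter B) {L : Stack2 B} (hL : Headed τ' L) (hL0 : L ≠ [])
    (m : Stack2 B) :
    mil [τ] (L.map (List.cons τ)) m ↔
      m = [[τ]] ∨ ∃ m', m = m'.map (List.cons τ) ∧ mil [τ'] L m' := by
  rw [← mil_map_cons]
  obtain ⟨w, L, rfl⟩ := List.exists_cons_of_ne_nil hL0
  obtain ⟨u, rfl⟩ := hL w (by simp)
  have e1 : lcp [τ] (τ :: τ' :: u) = [τ] := by simp [lcp]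
  have e2 : lcp [τ, τ'] (τ :: τ' :: u) = [τ, τ'] := by simp [lcp]
  simp only [List.map_cons, mil, e1, e2]
  constructor
  · rintro (⟨v, rfl, ⟨x, rfl⟩, h2⟩ | h)
    · cases x with
      | nil => simp
      | cons b x =>
        right; left
        simp at h2
        obtain ⟨rfl, h2⟩ := h2
        exact ⟨_, rfl, by simp, by simpa using h2⟩
    · exact Or.inr (Or.inr h)
  · rintro (rfl | ⟨v, rfl, ⟨x, rfl⟩, h2⟩ | h)
    · exact Or.inl ⟨[τ], rfl, by simp, by simp⟩
    · exact Or.inl ⟨_, rfl, by simp, h2⟩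
    · exact Or.inr h

theorem mil_prev (τ τ' : Letter B) {L R : Stack2 B} (hL : Headed τ' L) (hL0 : L ≠ [])
    (hR : Headed τ R) (hc : NoCont τ τ' R) (p : Word B) (m : Stack2 B) :
    mil ((L.map (List.cons τ)).getLastD p) R m ↔ mil [τ] R m := by
  obtain ⟨i, x, rfl⟩ := List.eq_nil_or_concat L |>.resolve_left hL0
  obtain ⟨u, rfl⟩ := hL x (by simp)
  have : ((i ++ [τ' :: u]).map (List.cons τ)).getLastD p = τ :: τ' :: u := by simp
  rw [List.concat_eq_append, this]
  cases R with
  | nil => simp [mil]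
  | cons w R =>
    obtain ⟨y, rfl⟩ := hR w (by simp)
    have : lcp (τ :: τ' :: u) (τ :: y) = lcp [τ] (τ :: y) := by
      rw [lcp_cons_cons, lcp_cons_cons]
      congr 1
      cases y with
      | nil => simp [lcp]
      | cons b y =>
        have : τ' ≠ b := by
          rintro rfl
          exact hc y R rfl
        simp [lcp, this]
    simp only [mil, this]

theorem mil_app (τ τ' : Letter B) {L R : Stack2 B} (hL : Headed τ' L) (hL0 : L ≠ [])
    (hR : Headed τ R) (hc : NoCont τ τ' R) (m : Stack2 B) :
    mil [τ] (L.map (List.cons τ) ++ R) m ↔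
      m = [[τ]] ∨ (∃ m', m = m'.map (List.cons τ) ∧ mil [τ'] L m') ∨
        ∃ m', m = L.map (List.cons τ) ++ m' ∧ mil [τ] R m' := by
  rw [mil_append, mil_blk τ τ' hL hL0]
  simp only [mil_prev τ τ' hL hL0 hR hc]
  rw [or_assoc]

/-- Definition of the map by the first step of the address. -/
def combine (r : Stack2 B) (g h : List Bool → Stack2 B) : List Bool → Stack2 B
  | [] => r
  | false :: d => g d
  | true :: d => h d

theorem main_blockline (Q : Type) {τ : Letter B} {l : Stack2 B} (hg : Good_s19 τ l)
    (σ : EncLabel Q B) (n : ℕ) (hn : size2 l < n) :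
    ∃ f : List Bool → Stack2 B,
      (∀ d, (encBL Q n σ l).labelAt d ≠ none → mil [τ] l (f d) ∧
        ∀ n', size2 (f d) < n' → encBL Q n' σ (f d) = restrictLex (encBL Q n σ l) d) ∧
      (∀ m, mil [τ] l m → ∃ d, (encBL Q n σ l).labelAt d ≠ none ∧ f d = m) ∧
      (∀ d e, (encBL Q n σ l).labelAt d ≠ none → (encBL Q n σ l).labelAt e ≠ none →
        lexLe d e → d ≠ e → mlt (f d) (f e)) := by
  induction hg generalizing σ n with
  | one τ =>
    rw [encBL_one]
    refine ⟨fun _ => [[τ]], ?_, ?_, ?_⟩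
    · rintro (_ | ⟨_ | _, d⟩) h <;> simp [PTree.labelAt] at h
      exact ⟨(mil_single _ _ _).2 (Or.inl rfl), fun n' _ => by rw [encBL_one]; rfl⟩
    · intro m hm
      rcases (mil_single _ _ _).1 hm with rfl | ⟨m', rfl, h⟩
      · exact ⟨[], by simp [PTree.labelAt], rfl⟩
      · exact h.elim
    · rintro (_ | ⟨_ | _, d⟩) (_ | ⟨_ | _, e⟩) h1 h2 <;> simp [PTree.labelAt] at h1 h2
      intro _ h; exact absurd rfl h
  | @cons τ R hR ih =>
    obtain ⟨n, rfl⟩ := Nat.exists_eq_succ_of_ne_zero (by omega : n ≠ 0)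
    simp only [Nat.succ_eq_add_one]
    rw [encBL_cons _ _ _ _ hR.ne_nil]
    have hs : size2 ([τ] :: R) = size2 R + 1 := by simp [size2]; omega
    obtain ⟨h, h1, h2, h3⟩ := ih epsLab n (by omega)
    refine ⟨combine [[τ]] (fun _ => []) (fun d => [τ] :: h d), ?_, ?_, ?_⟩
    · rintro (_ | ⟨_ | _, d⟩) hd
      · exact ⟨(mil_single _ _ _).2 (Or.inl rfl),
          fun n' _ => by simp only [combine]; rw [encBL_one]; rfl⟩
      · simp [PTree.labelAt] at hd
      · simp only [PTree.labelAt] at hd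
        obtain ⟨h4, h5⟩ := h1 d hd
        refine ⟨(mil_single _ _ _).2 (Or.inr ⟨_, rfl, h4⟩), fun n' hn' => ?_⟩
        simp only [combine] at hn' ⊢
        have hs' : size2 ([τ] :: h d) = size2 (h d) + 1 := by simp [size2]; omega
        obtain ⟨n', rfl⟩ := Nat.exists_eq_succ_of_ne_zero (by omega : n' ≠ 0)
        simp only [Nat.succ_eq_add_one]
        rw [encBL_cons _ _ _ _ (mil_ne_nil h4), h5 n' (by omega)]
        rfl
    · intro m hm
      rcases (mil_single _ _ _).1 hm with rfl | ⟨m', rfl, hm'⟩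
      · exact ⟨[], by simp [PTree.labelAt], rfl⟩
      · obtain ⟨d, hd, rfl⟩ := h2 m' hm'
        exact ⟨true :: d, by simpa [PTree.labelAt] using hd, rfl⟩
    · rintro (_ | ⟨_ | _, d⟩) (_ | ⟨_ | _, e⟩) hd he hle hne
      all_goals simp only [PTree.labelAt] at hd he
      all_goals try (exact absurd rfl hd)
      all_goals try (exact absurd rfl he)
      all_goals try (exact absurd rfl hne)
      all_goals try (exact absurd hle lexLe_nil_right)
      · have := List.length_pos_of_ne_nil (mil_ne_nil (h1 e he).1)
        left
        simpa [combine] using this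
      · rw [lexLe_cons] at hle
        have := h3 d e hd he (by simpa using hle) (by rintro rfl; exact hne rfl)
        exact mlt_append [[τ]] (mil_ne_nil (h1 d hd).1) (mil_ne_nil (h1 e he).1) this
  | @blk τ τ' L hL ih =>
    obtain ⟨n, rfl⟩ := Nat.exists_eq_succ_of_ne_zero (by omega : n ≠ 0)
    simp only [Nat.succ_eq_add_one]
    rw [encBL_blk_nil _ _ _ _ _ hL.headed hL.ne_nil]
    have hlen := List.length_pos_of_ne_nil hL.ne_nil
    rw [size2_map] at hn
    obtain ⟨g, h1, h2, h3⟩ := ih (symLab τ') n (by omega)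
    refine ⟨combine [[τ]] (fun d => (g d).map (List.cons τ)) (fun _ => []), ?_, ?_, ?_⟩
    · rintro (_ | ⟨_ | _, d⟩) hd
      · exact ⟨(mil_blk _ _ hL.headed hL.ne_nil _).2 (Or.inl rfl),
          fun n' _ => by simp only [combine]; rw [encBL_one]; rfl⟩
      · simp only [PTree.labelAt] at hd
        obtain ⟨h4, h5⟩ := h1 d hd
        refine ⟨(mil_blk _ _ hL.headed hL.ne_nil _).2 (Or.inr ⟨_, rfl, h4⟩), fun n' hn' => ?_⟩
        simp only [combine] at hn' ⊢
        have := List.length_pos_of_ne_nil (mil_ne_nil h4)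
        rw [size2_map] at hn'
        obtain ⟨n', rfl⟩ := Nat.exists_eq_succ_of_ne_zero (by omega : n' ≠ 0)
        simp only [Nat.succ_eq_add_one]
        rw [encBL_blk_nil _ _ _ _ τ' (mil_headed hL.headed h4) (mil_ne_nil h4),
          h5 n' (by omega)]
        rfl
      · simp [PTree.labelAt] at hd
    · intro m hm
      rcases (mil_blk _ _ hL.headed hL.ne_nil _).1 hm with rfl | ⟨m', rfl, hm'⟩
      · exact ⟨[], by simp [PTree.labelAt], rfl⟩
      · obtain ⟨d, hd, rfl⟩ := h2 m' hm'
        exact ⟨false :: d, by simpa [PTree.labelAt] using hd, rfl⟩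
    · rintro (_ | ⟨_ | _, d⟩) (_ | ⟨_ | _, e⟩) hd he hle hne
      all_goals simp only [PTree.labelAt] at hd he
      all_goals try (exact absurd rfl hd)
      all_goals try (exact absurd rfl he)
      all_goals try (exact absurd rfl hne)
      all_goals try (exact absurd hle lexLe_nil_right)
      · exact mlt_root τ τ' (mil_ne_nil (h1 e he).1) (mil_headed hL.headed (h1 e he).1)
      · rw [lexLe_cons] at hle
        have := h3 d e hd he (by simpa using hle) (by rintro rfl; exact hne rfl)
        exact mlt_map τ (mil_ne_nil (h1 d hd).1) (mil_ne_nil (h1 e he).1) this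
  | @app τ τ' L R hL hR hc ih1 ih2 =>
    obtain ⟨n, rfl⟩ := Nat.exists_eq_succ_of_ne_zero (by omega : n ≠ 0)
    simp only [Nat.succ_eq_add_one]
    rw [encBL_blk_app _ _ _ _ _ hL.headed hL.ne_nil hc hR.ne_nil]
    have hlen := List.length_pos_of_ne_nil hL.ne_nil
    rw [size2_append, size2_map] at hn
    obtain ⟨g, h1, h2, h3⟩ := ih1 (symLab τ') n (by omega)
    obtain ⟨k, k1, k2, k3⟩ := ih2 epsLab n (by omega)
    have key := mil_app τ τ' hL.headed hL.ne_nil hR.headed hc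
    refine ⟨combine [[τ]] (fun d => (g d).map (List.cons τ))
      (fun d => L.map (List.cons τ) ++ k d), ?_, ?_, ?_⟩
    · rintro (_ | ⟨_ | _, d⟩) hd
      · exact ⟨(key _).2 (Or.inl rfl),
          fun n' _ => by simp only [combine]; rw [encBL_one]; rfl⟩
      · simp only [PTree.labelAt] at hd
        obtain ⟨h4, h5⟩ := h1 d hd
        refine ⟨(key _).2 (Or.inr (Or.inl ⟨_, rfl, h4⟩)), fun n' hn' => ?_⟩
        simp only [combine] at hn' ⊢
        have := List.length_pos_of_ne_nil (mil_ne_nil h4)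
        rw [size2_map] at hn'
        obtain ⟨n', rfl⟩ := Nat.exists_eq_succ_of_ne_zero (by omega : n' ≠ 0)
        simp only [Nat.succ_eq_add_one]
        rw [encBL_blk_nil _ _ _ _ τ' (mil_headed hL.headed h4) (mil_ne_nil h4),
          h5 n' (by omega)]
        rfl
      · simp only [PTree.labelAt] at hd
        obtain ⟨h4, h5⟩ := k1 d hd
        refine ⟨(key _).2 (Or.inr (Or.inr ⟨_, rfl, h4⟩)), fun n' hn' => ?_⟩
        simp only [combine] at hn' ⊢
        rw [size2_append, size2_map] at hn'
        obtain ⟨n', rfl⟩ := Nat.exists_eq_succ_of_ne_zero (by omega : n' ≠ 0)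
        simp only [Nat.succ_eq_add_one]
        rw [encBL_blk_app _ _ _ _ τ' hL.headed hL.ne_nil (mil_noCont hc h4) (mil_ne_nil h4),
          h5 n' (by omega), encBL_fuel Q hL _ n' n (by omega) (by omega)]
        rfl
    · intro m hm
      rcases (key _).1 hm with rfl | ⟨m', rfl, hm'⟩ | ⟨m', rfl, hm'⟩
      · exact ⟨[], by simp [PTree.labelAt], rfl⟩
      · obtain ⟨d, hd, rfl⟩ := h2 m' hm'
        exact ⟨false :: d, by simpa [PTree.labelAt] using hd, rfl⟩
      · obtain ⟨d, hd, rfl⟩ := k2 m' hm'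
        exact ⟨true :: d, by simpa [PTree.labelAt] using hd, rfl⟩
    · rintro (_ | ⟨_ | _, d⟩) (_ | ⟨_ | _, e⟩) hd he hle hne
      all_goals simp only [PTree.labelAt] at hd he
      all_goals try (exact absurd rfl hne)
      all_goals try (exact absurd hle lexLe_nil_right)
      · exact mlt_root τ τ' (mil_ne_nil (h1 e he).1) (mil_headed hL.headed (h1 e he).1)
      · have := List.length_pos_of_ne_nil (mil_ne_nil (k1 e he).1)
        left
        simp [combine]
        omega
      · rw [lexLe_cons] at hle
        have := h3 d e hd he (by simpa using hle) (by rintro rfl; exact hne rfl)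
        exact mlt_map τ (mil_ne_nil (h1 d hd).1) (mil_ne_nil (h1 e he).1) this
      · have := List.length_pos_of_ne_nil (mil_ne_nil (k1 e he).1)
        have := mil_length (h1 d hd).1
        left
        simp [combine]
        omega
      · rw [lexLe_cons] at hle
        simp at hle
      · rw [lexLe_cons] at hle
        have := k3 d e hd he (by simpa using hle) (by rintro rfl; exact hne rfl)
        exact mlt_append _ (mil_ne_nil (k1 d hd).1) (mil_ne_nil (k1 e he).1) this

/-! ### Milestones versus `mil` -/

theorem mil_iff (p : Word B) (s m : Stack2 B) :
    mil p s m ↔ ∃ i v, i < s.length ∧ m = s.take i ++ [v] ∧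
      lcp (if i = 0 then p else s.getD (i - 1) []) (s.getD i []) <+: v ∧ v <+: s.getD i [] := by
  induction s generalizing p m with
  | nil => simp [mil]
  | cons w s ih =>
    simp only [mil, ih]
    constructor
    · rintro (⟨v, rfl, h1, h2⟩ | ⟨m', rfl, i, v, hi, rfl, h1, h2⟩)
      · exact ⟨0, v, by simp, by simp, by simpa using h1, by simpa using h2⟩
      · refine ⟨i + 1, v, by simpa using hi, by simp, ?_, by simpa using h2⟩
        cases i with
        | zero => simpa using h1
        | succ i => simpa using h1
    · rintro ⟨i, v, hi, rfl, h1, h2⟩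
      cases i with
      | zero => exact Or.inl ⟨v, by simp, by simpa using h1, by simpa using h2⟩
      | succ i =>
        refine Or.inr ⟨s.take i ++ [v], by simp, i, v, by simpa using hi, rfl, ?_, by simpa using h2⟩
        cases i with
        | zero => simpa using h1
        | succ i => simpa using h1

theorem milestone_iff (bot : B) (s m : Stack2 B) :
    Milestone bot s m ↔ mil [Sum.inl bot] s m := by
  rw [mil_iff]
  simp [Milestone, wordAt]

/-! ### Stacks -/

theorem isStack_inv {bot : B} {s : Stack2 B} (h : IsStack bot s) :
    s ≠ [] ∧ Headed (Sum.inl bot) s := by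
  induction h with
  | base =>
    refine ⟨by simp [bottom2], ?_⟩
    intro w hw
    simp [bottom2] at hw
    exact ⟨_, hw⟩
  | @step s t op hs hop ih =>
    obtain ⟨h0, hh⟩ := ih
    obtain ⟨i, x, rfl⟩ := List.eq_nil_or_concat s |>.resolve_left h0
    simp only [List.concat_eq_append] at *
    have hi : Headed (Sum.inl bot) i := fun w hw => hh w (by simp [hw])
    obtain ⟨u, hu⟩ := hh x (by simp)
    have snoc : ∀ y : Word B, (∃ u, y = Sum.inl bot :: u) →
        (i ++ [y] ≠ [] ∧ Headed (Sum.inl bot) (i ++ [y])) := by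
      intro y hy
      refine ⟨by simp, ?_⟩
      intro w hw
      rcases List.mem_append.1 hw with hw | hw
      · exact hi w hw
      · simp at hw; subst hw; exact hy
    have hp1 : ∀ t, pop1 (i ++ [x]) = some t → t ≠ [] ∧ Headed (Sum.inl bot) t := by
      intro t ht
      simp only [pop1, List.getLast?_append_of_ne_nil _ (List.cons_ne_nil x []),
        List.getLast?_singleton] at ht
      split_ifs at ht with hx
      simp at ht
      subst ht
      apply snoc
      subst hu
      cases u with
      | nil => simp at hx
      | cons a u => exact ⟨_, List.dropLast_cons_of_ne_nil (by simp)⟩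
    cases op with
    | clone2 =>
      simp [applyOp, clone2, top2] at hop
      subst hop
      refine ⟨by simp, ?_⟩
      intro w hw
      apply hh
      simpa using hw
    | pop1 => exact hp1 t hop
    | pop2 =>
      simp [applyOp, pop2] at hop
      obtain ⟨h1, rfl⟩ := hop
      exact ⟨List.ne_nil_of_length_pos (by simpa using h1), hi⟩
    | collapse =>
      simp only [applyOp, collapse] at hop
      split at hop
      · split_ifs at hop with hk
        simp only [Option.some.injEq] at hop
        subst hop
        refine ⟨?_, fun w hw => hh w (List.mem_of_mem_take hw)⟩
        rw [Ne, List.take_eq_nil_iff]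
        simp
        omega
      · exact hp1 t hop
      · simp at hop
    | push1 a =>
      simp only [applyOp, push1] at hop
      split_ifs at hop
      simp [top2] at hop
      subst hop
      exact snoc _ ⟨_, by rw [hu]; rfl⟩
    | push2 a =>
      simp only [applyOp, push2] at hop
      split_ifs at hop
      simp [top2] at hop
      subst hop
      exact snoc _ ⟨_, by rw [hu]; rfl⟩

theorem isStack_take {bot : B} (s t : Stack2 B) (hs : s ≠ []) (h : IsStack bot (s ++ t)) :
    IsStack bot s := by
  induction t using List.reverseRecOn with
  | nil => simpa using h
  | append_singleton t x ih =>
    apply ih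
    refine .step .pop2 h ?_
    rw [← List.append_assoc]
    have : s ++ t ≠ [] := by simp [hs]
    have := List.length_pos_of_ne_nil this
    simp only [applyOp, pop2]
    rw [if_pos (by simp at *; omega)]
    simp

theorem isStack_pop1s {bot : B} (s : Stack2 B) (v x : Word B) (hv : v ≠ [])
    (h : IsStack bot (s ++ [v ++ x])) : IsStack bot (s ++ [v]) := by
  induction x using List.reverseRecOn with
  | nil => simpa using h
  | append_singleton x a ih =>
    apply ih
    refine .step .pop1 h ?_
    have := List.length_pos_of_ne_nil hv
    rw [← List.append_assoc]
    simp only [applyOp, pop1, List.getLast?_append_of_ne_nil _ (List.cons_ne_nil _ []),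
        List.getLast?_singleton]
    rw [if_pos (by simp; omega)]
    simp

theorem isStack_milestone {bot : B} {s m : Stack2 B} (hs : IsStack bot s)
    (hm : mil [Sum.inl bot] s m) : IsStack bot m := by
  have hh := mil_headed (isStack_inv hs).2 hm
  obtain ⟨i, v, hi, rfl, -, h2⟩ := (mil_iff _ _ _).1 hm
  obtain ⟨x, hx⟩ := h2
  obtain ⟨u, hu⟩ := hh v (by simp)
  apply isStack_pop1s _ _ x (by simp [hu])
  rw [hx]
  apply isStack_take _ (s.drop (i + 1)) (by simp)
  rw [List.getD_eq_getElem _ _ hi, List.take_append_getElem hi, List.take_append_drop]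
  exact hs

/-! ### The order `≪` -/

open Classical in
/-- A rank function for the comparison of topmost words. -/
noncomputable def rank (u w : Word B) : ℕ :=
  if w <+: u then u.length - w.length else u.length + 1 + w.length

noncomputable def rankS (bot : B) (s : Stack2 B) : ℕ :=
  rank (wordAt bot s (s.length - 1)) (s.getLastD [])

theorem wordAt_congr (bot : B) {s t : Stack2 B} (h0 : s ≠ []) (hl : s.length = t.length)
    (h : s.dropLast = t.dropLast) :
    wordAt bot s (s.length - 1) = wordAt bot t (t.length - 1) := by
  have ht : t ≠ [] := by
    rintro rfl
    simp at hl
    exact h0 hl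
  obtain ⟨i, x, rfl⟩ := List.eq_nil_or_concat s |>.resolve_left h0
  obtain ⟨j, y, rfl⟩ := List.eq_nil_or_concat t |>.resolve_left ht
  simp at h
  subst h
  unfold wordAt
  by_cases hi : i = []
  · simp [hi]
  · have := List.length_pos_of_ne_nil hi
    have hlt : i.length - 1 < i.length := by omega
    simp [hi, List.getD_eq_getElem?_getD]
    rw [List.getElem_append_left hlt, List.getElem_append_left hlt]

theorem prefix_ne_length {u v : Word B} (h : u <+: v) (hne : u ≠ v) : u.length < v.length := by
  rcases lt_or_eq_of_le h.length_le with h1 | h1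
  · exact h1
  · exact absurd (h.eq_of_length h1) hne

theorem llBase_lt {bot : B} {s t : Stack2 B} (h : llBase bot s t) :
    s.length < t.length ∨ (s.length = t.length ∧ rankS bot s < rankS bot t) := by
  rcases h with h | ⟨h0, hl, hd, h⟩
  · exact Or.inl h
  · refine Or.inr ⟨hl, ?_⟩
    unfold rankS
    rw [← wordAt_congr bot h0 hl hd]
    rcases h with ⟨h1, h2, h3⟩ | ⟨h1, h2, h3⟩
    · have := prefix_ne_length h1 h2
      have := h3.length_le
      rw [rank, rank, if_pos h3, if_pos (h1.trans h3)]
      omega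
    · have := prefix_ne_length h1 h2
      rw [rank, rank, if_neg h3]
      split_ifs <;> omega

theorem ll_lt {bot : B} {s t : Stack2 B} (h : ll bot s t) :
    s = t ∨ s.length < t.length ∨ (s.length = t.length ∧ rankS bot s < rankS bot t) := by
  induction h with
  | refl => exact Or.inl rfl
  | tail _ h ih =>
    have := llBase_lt h
    rcases ih with rfl | ih
    · exact Or.inr this
    · right; omega

theorem ll_antisymm {bot : B} {s t : Stack2 B} (h : ll bot s t) (h' : ll bot t s) : s = t := by
  rcases ll_lt h with rfl | h1
  · rfl
  · rcases ll_lt h' with rfl | h2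
    · rfl
    · omega

theorem prefix_lcp {u v w : Word B} (h1 : w <+: u) (h2 : w <+: v) : w <+: lcp u v := by
  induction w generalizing u v with
  | nil => simp
  | cons a w ih =>
    obtain ⟨x, rfl⟩ := h1
    obtain ⟨y, rfl⟩ := h2
    simp only [List.cons_append, lcp_cons_cons, List.cons_prefix_cons, true_and]
    exact ih (by simp) (by simp)

theorem ll_of_mlt {bot : B} {s m m' : Stack2 B} (hm : Milestone bot s m)
    (hm' : Milestone bot s m') (h : mlt m m') : ll bot m m' := by
  apply Relation.ReflTransGen.single
  rcases h with h | ⟨h1, h2⟩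
  · exact Or.inl h
  · obtain ⟨i, v, hi, rfl, h3, h4⟩ := hm
    obtain ⟨j, v', hj, rfl, h5, h6⟩ := hm'
    have : i = j := by simp at h1; omega
    subst this
    right
    have hw : wordAt bot (s.take i ++ [v]) ((s.take i ++ [v]).length - 1) = wordAt bot s i := by
      have e : (s.take i ++ [v]).length - 1 = i := by simp; omega
      rw [e]
      unfold wordAt
      split_ifs with h0
      · rfl
      · have hlt : i - 1 < (s.take i).length := by simp; omega
        rw [List.getD_eq_getElem?_getD, List.getElem?_append_left hlt,
          List.getElem?_take_of_lt (by omega), ← List.getD_eq_getElem?_getD]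
    refine ⟨by simp, h1, by simp, Or.inr ?_⟩
    rw [hw]
    simp at h2
    simp
    refine ⟨List.prefix_of_prefix_length_le h4 h6 (by omega), by rintro rfl; omega, ?_⟩
    intro h7
    have := (prefix_lcp h7 h6).length_le
    have := h3.length_le
    omega

end Aux

/-- For every stack `s`, the map `d ↦ LeftStack(d,s)` (the stack
whose encoding is the left-and-downward closed restriction of `Enc(s)` at `d`) is an
order isomorphism from `(dom(Enc(s)), ≤_lex)` onto `(Milestones(s), ≪)`. -/
theorem leftStack_order_isomorphism
    {A : Type} [DecidableEq A] (bot : A) (s : Stack2 A) (hs : IsStack bot s) :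
    ∃ f : List Bool → Stack2 A,
      (∀ d, (encStack Unit bot s).labelAt d ≠ none →
        IsStack bot (f d) ∧
          encStack Unit bot (f d) = restrictLex (encStack Unit bot s) d) ∧
      Set.BijOn f {d | (encStack Unit bot s).labelAt d ≠ none}
        {m | Milestone bot s m} ∧
      (∀ d ∈ {d : List Bool | (encStack Unit bot s).labelAt d ≠ none},
        ∀ e ∈ {d : List Bool | (encStack Unit bot s).labelAt d ≠ none},
          (lexLe d e ↔ ll bot (f d) (f e))) := by
  obtain ⟨hs0, hsh⟩ := isStack_inv hs
  have hg : Good_s19 (Sum.inl bot) s := good_of_headed _ _ s (Nat.lt_succ_self _) hs0 hsh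
  obtain ⟨f, h1, h2, h3⟩ := main_blockline Unit hg (Sum.inr (Sum.inl (bot, 1))) (size2 s + 1)
    (Nat.lt_succ_self _)
  have hM : ∀ d, (encStack Unit bot s).labelAt d ≠ none → Milestone bot s (f d) :=
    fun d hd => (milestone_iff _ _ _).2 (h1 d hd).1
  have hmono : ∀ d e, (encStack Unit bot s).labelAt d ≠ none →
      (encStack Unit bot s).labelAt e ≠ none → lexLe d e → ll bot (f d) (f e) := by
    intro d e hd he hle
    by_cases hde : d = e
    · subst hde; exact Relation.ReflTransGen.refl
    · exact ll_of_mlt (hM d hd) (hM e he) (h3 d e hd he hle hde)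
  have hinj : ∀ d e, (encStack Unit bot s).labelAt d ≠ none →
      (encStack Unit bot s).labelAt e ≠ none → f d = f e → d = e := by
    intro d e hd he hfe
    by_contra hde
    rcases lexLe_total d e with h | h
    · have := h3 d e hd he h hde
      rw [hfe] at this
      unfold mlt at this
      omega
    · have := h3 e d he hd h (Ne.symm hde)
      rw [hfe] at this
      unfold mlt at this
      omega
  refine ⟨f, ?_, ⟨?_, ?_, ?_⟩, ?_⟩
  · intro d hd
    obtain ⟨h4, h5⟩ := h1 d hd
    exact ⟨isStack_milestone hs h4, h5 _ (Nat.lt_succ_self _)⟩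
  · intro d hd
    exact hM d hd
  · intro d hd e he hfe
    exact hinj d e hd he hfe
  · intro m hm
    obtain ⟨d, hd, hfd⟩ := h2 m ((milestone_iff _ _ _).1 hm)
    exact ⟨d, hd, hfd⟩
  · intro d hd e he
    refine ⟨hmono d e hd he, fun h => ?_⟩
    rcases lexLe_total d e with h' | h'
    · exact h'
    · have := hinj d e hd he (ll_antisymm h (hmono e d he hd h'))
      subst this
      exact h'


end CPG
end
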